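/- arXiv:2204.14230 — 2 statements merged into one kernel-verified Lean document; each statement's English description precedes it below -/
import Mathlib

section
/- Let k be a field and let F : C ⥤ D be an exact k-linear fully faithful functor between abelian k-linear categories. Assume that every object of C has finite length and finite-dimensional endomorphism algebra over k, and that F sends semisimple objects of C to semisimple objects of D. Then the essential image of F is closed under subobjects and quotients in D: if X is an object of C and Y is a subobject (or quotient) of F(X) in D, then Y is isomorphic to F(Z) for some object Z of C. -/
open CategoryTheory CategoryTheory.Limits

/-- An object of an abelian category is semisimple if it is isomorphic to a finite
direct sum of simple objects. -/
def IsSemisimpleObj {C : Type*} [Category C] [Abelian C] (X : C) : Prop :=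
  ∃ (n : ℕ) (f : Fin n → C), (∀ i, Simple (f i)) ∧
    letI : CategoryTheory.Limits.HasFiniteBiproducts C :=
      CategoryTheory.Limits.HasFiniteBiproducts.of_hasFiniteProducts
    letI : CategoryTheory.Limits.HasBiproductsOfShape (Fin n) C :=
      CategoryTheory.Limits.HasFiniteBiproducts.out n
    Nonempty (X ≅ ⨁ f)

/-- An object of an abelian category has finite length if there is a bound on the length
of strict chains of subobjects. -/
def HasFiniteLengthObj {C : Type*} [Category C] [Abelian C] (X : C) : Prop :=
  ∃ N : ℕ, ∀ s : Fin (N + 1) → Subobject X, ¬ StrictMono s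

lemma aux_pullback_le {C : Type*} [Category C] [Abelian C] {X X' : C} (π : X ⟶ X') [Epi π]
    (p q : Subobject X') (h : (Subobject.pullback π).obj p ≤ (Subobject.pullback π).obj q) :
    p ≤ q := by
  have hp := Subobject.isPullback π p
  have hq := Subobject.isPullback π q
  have : Epi (Subobject.pullbackπ π p) := by
    have e : Subobject.pullbackπ π p = hp.isoPullback.hom ≫ pullback.fst _ _ := by simp
    rw [e]
    infer_instance
  have h0 : p.arrow ≫ cokernel.π q.arrow = 0 := by
    rw [← cancel_epi (Subobject.pullbackπ π p), reassoc_of% hp.w, ← Subobject.ofLE_arrow h,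
      Category.assoc, ← reassoc_of% hq.w]
    simp
  exact Subobject.le_of_comm (Abelian.monoLift q.arrow p.arrow h0) (by simp)

lemma aux_chain {C : Type*} [Category C] [Abelian C] {X S : C} (i : S ⟶ X) (hi : i ≠ 0)
    (N : ℕ) (h : ∀ s : Fin (N + 1 + 1) → Subobject X, ¬ StrictMono s) :
    ∀ s : Fin (N + 1) → Subobject (cokernel i), ¬ StrictMono s := by
  intro s hs
  refine h (Fin.cons ⊥ (fun j => (Subobject.pullback (cokernel.π i)).obj (s j))) ?_
  have hmono : StrictMono (fun j => (Subobject.pullback (cokernel.π i)).obj (s j)) := by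
    intro a b hab
    refine lt_of_le_not_ge ((Subobject.pullback (cokernel.π i)).monotone (hs hab).le) ?_
    intro hle
    exact absurd (aux_pullback_le _ _ _ hle) (not_le_of_gt (hs hab))
  have hbot : ∀ j, ⊥ < (Subobject.pullback (cokernel.π i)).obj (s j) := by
    intro j
    rw [bot_lt_iff_ne_bot]
    intro hb
    have hp := Subobject.isPullback (cokernel.π i) (s j)
    apply hi
    have h1 : hp.lift 0 i (by simp) ≫ ((Subobject.pullback (cokernel.π i)).obj (s j)).arrow = i :=
      hp.lift_snd _ _ _
    have h2 : ((Subobject.pullback (cokernel.π i)).obj (s j)).arrow = 0 := by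
      rw [hb]; exact Subobject.bot_arrow
    exact h1.symm.trans ((congrArg _ h2).trans comp_zero)
  intro a b hab
  induction b using Fin.cases with
  | zero => exact absurd hab (Fin.not_lt_zero a)
  | succ b =>
    induction a using Fin.cases with
    | zero => simpa using hbot b
    | succ a => simpa using hmono (Fin.succ_lt_succ_iff.1 hab)

lemma aux_artinian {C : Type*} [Category C] [Abelian C] {X : C}
    (h : HasFiniteLengthObj X) : IsArtinianObject X := by
  obtain ⟨N, hN⟩ := h
  rw [isArtinianObject_iff_not_strictAnti]
  intro f hf
  refine hN (fun j => f (N - j.1)) ?_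
  intro a b hab
  exact hf (by have := a.2; have := b.2; have : a.1 < b.1 := hab; omega)

lemma aux_simple {C D : Type*} [Category C] [Category D] [Abelian C] [Abelian D]
    (F : C ⥤ D) [F.Additive] [F.Full] [F.Faithful]
    (S : C) [Simple S] (h : IsSemisimpleObj (F.obj S)) : Simple (F.obj S) := by
  obtain ⟨n, f, hf, h⟩ := h
  letI : HasFiniteBiproducts D := HasFiniteBiproducts.of_hasFiniteProducts
  obtain ⟨e⟩ : Nonempty (F.obj S ≅ ⨁ f) := h
  have hne : ∃ j, e.hom ≫ biproduct.π f j ≠ 0 := by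
    by_contra! hc
    have h1 : e.hom = 0 := by
      ext j
      simpa using hc j
    have h2 : 𝟙 (F.obj S) = 0 := by
      rw [← e.hom_inv_id, h1, zero_comp]
    apply id_nonzero S
    apply F.map_injective
    simpa using h2
  obtain ⟨j, hj⟩ := hne
  have := hf j
  have hιπ : (biproduct.ι f j ≫ e.inv) ≫ (e.hom ≫ biproduct.π f j) = 𝟙 _ := by simp
  obtain ⟨t, ht⟩ := F.map_surjective ((e.hom ≫ biproduct.π f j) ≫ (biproduct.ι f j ≫ e.inv))
  have ht0 : t ≠ 0 := by
    rintro rfl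
    apply hj
    have : (e.hom ≫ biproduct.π f j) =
      ((e.hom ≫ biproduct.π f j) ≫ (biproduct.ι f j ≫ e.inv)) ≫ (e.hom ≫ biproduct.π f j) := by
      rw [Category.assoc, hιπ, Category.comp_id]
    rw [this, ← ht]
    simp
  have : IsIso t := isIso_of_hom_simple ht0
  have hiso : IsIso ((e.hom ≫ biproduct.π f j) ≫ (biproduct.ι f j ≫ e.inv)) := by
    rw [← ht]; infer_instance
  have hm : Mono (e.hom ≫ biproduct.π f j) := mono_of_mono _ (biproduct.ι f j ≫ e.inv)
  have : F.obj S ≅ f j :=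
    { hom := e.hom ≫ biproduct.π f j
      inv := biproduct.ι f j ≫ e.inv
      hom_inv_id := by
        rw [← cancel_mono (e.hom ≫ biproduct.π f j), Category.assoc, hιπ]
        simp
      inv_hom_id := hιπ }
  exact Simple.of_iso this

lemma aux_sub {C D : Type*} [Category C] [Category D] [Abelian C] [Abelian D]
    (F : C ⥤ D) [F.Additive] [F.Full] [F.Faithful]
    [PreservesFiniteLimits F] [PreservesFiniteColimits F]
    (hlen : ∀ X : C, HasFiniteLengthObj X)
    (hs : ∀ S : C, Simple S → Simple (F.obj S)) (N : ℕ) :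
    ∀ (X : C), (∀ s : Fin (N + 1) → Subobject X, ¬ StrictMono s) →
      ∀ (Y : D) (f : Y ⟶ F.obj X), Mono f → ∃ Z : C, Nonempty (Y ≅ F.obj Z) := by
  induction N with
  | zero =>
    intro X hX
    exact absurd (fun a b hab => by omega) (hX (fun _ => ⊥))
  | succ N ih =>
    intro X hX Y f hf
    by_cases hz : IsZero X
    · refine ⟨X, ⟨?_⟩⟩
      have h1 : IsZero (F.obj X) := F.map_isZero hz
      exact (IsZero.of_mono f h1).iso h1
    have := aux_artinian (hlen X)
    obtain ⟨S, hS⟩ := exists_simple_subobject hz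
    have hi : S.arrow ≠ 0 := by
      intro h0
      apply id_nonzero (S : C)
      rw [← cancel_mono S.arrow, h0]
      simp
    have ih' := ih _ (aux_chain S.arrow hi N hX)
    have hFS := hs _ hS
    set i := S.arrow with hidef
    have hex : (ShortComplex.mk i (cokernel.π i) (by simp)).Exact :=
      ShortComplex.exact_of_g_is_cokernel _ (cokernelIsCokernel i)
    have hexF := hex.map F
    have hw : F.map i ≫ F.map (cokernel.π i) = 0 := by
      rw [← F.map_comp]; simp
    have hlift : ∀ {A : D} (a : A ⟶ F.obj X), a ≫ F.map (cokernel.π i) = 0 →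
        ∃ b : A ⟶ F.obj (S : C), b ≫ F.map i = a := by
      intro A a ha
      have : Mono ((ShortComplex.mk i (cokernel.π i) (by simp)).map F).f := by
        change Mono (F.map i)
        infer_instance
      exact ⟨hexF.lift a ha, hexF.lift_f a ha⟩
    let g := f ≫ F.map (cokernel.π i)
    obtain ⟨l, hl⟩ := hlift (kernel.ι g ≫ f) (by simpa [g] using kernel.condition g)
    have hlm : Mono l := by
      have : Mono (l ≫ F.map i) := by rw [hl]; infer_instance
      exact mono_of_mono l (F.map i)
    by_cases hl0 : l = 0
    · have hg : Mono g := by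
        apply Preadditive.mono_of_kernel_zero
        rw [← cancel_mono f, ← hl, hl0]
        simp
      exact ih' Y g hg
    · have hliso : IsIso l := isIso_of_mono_of_nonzero hl0
      obtain ⟨Z, ⟨φ⟩⟩ := ih' _ (Abelian.image.ι g) inferInstance
      obtain ⟨z, hz⟩ := F.map_surjective (φ.inv ≫ Abelian.image.ι g)
      have hzm : Mono z := by
        apply F.mono_of_mono_map
        rw [hz]; infer_instance
      refine ⟨pullback (cokernel.π i) z, ?_⟩
      have hp := (IsPullback.of_hasPullback (cokernel.π i) z).map F
      have hcomm : f ≫ F.map (cokernel.π i) = (Abelian.factorThruImage g ≫ φ.hom) ≫ F.map z := by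
        rw [hz]; simp [g]
      let u := hp.lift f (Abelian.factorThruImage g ≫ φ.hom) hcomm
      have hu : u ≫ F.map (pullback.fst (cokernel.π i) z) = f := hp.lift_fst _ _ _
      have hum : Mono u := by
        have : Mono (u ≫ F.map (pullback.fst (cokernel.π i) z)) := by rw [hu]; infer_instance
        exact mono_of_mono u (F.map (pullback.fst (cokernel.π i) z))
      have hue : Epi u := by
        rw [epi_iff_surjective_up_to_refinements]
        intro A p
        obtain ⟨A', q, hq, a, ha⟩ := surjective_up_to_refinements_of_epi
          (Abelian.factorThruImage g ≫ φ.hom) (p ≫ F.map (pullback.snd (cokernel.π i) z))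
        obtain ⟨d, hd⟩ := hlift
          (q ≫ p ≫ F.map (pullback.fst (cokernel.π i) z) - a ≫ f) (by
            rw [Preadditive.sub_comp, Category.assoc, Category.assoc, Category.assoc, hcomm,
              hp.w, Category.assoc, reassoc_of% ha]
            simp)
        refine ⟨A', q, hq, a + d ≫ inv l ≫ kernel.ι g, ?_⟩
        rw [← cancel_mono (F.map (pullback.fst (cokernel.π i) z)), Category.assoc, Category.assoc,
          hu, Preadditive.add_comp, Category.assoc, Category.assoc, ← hl, IsIso.inv_hom_id_assoc,
          hd]
        abel
      have : IsIso u := isIso_of_mono_of_epi u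
      exact ⟨asIso u⟩

/-- Stalder's lemma: an exact `k`-linear fully faithful functor between
abelian `k`-linear categories, all of whose source objects have finite length and
finite-dimensional endomorphism algebras, and which preserves semisimple objects, has
essential image closed under subobjects and quotients. -/
theorem essImage_closed_under_subquotients
    {k : Type*} [Field k]
    {C D : Type*} [Category C] [Category D] [Abelian C] [Abelian D]
    [Linear k C] [Linear k D]
    (F : C ⥤ D) [F.Additive] [F.Linear k] [F.Full] [F.Faithful]
    [PreservesFiniteLimits F] [PreservesFiniteColimits F]
    (hlen : ∀ X : C, HasFiniteLengthObj X)
    (hend : ∀ X : C, FiniteDimensional k (X ⟶ X))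
    (hss : ∀ X : C, IsSemisimpleObj X → IsSemisimpleObj (F.obj X)) :
    (∀ (X : C) (Y : D) (f : Y ⟶ F.obj X), Mono f → ∃ Z : C, Nonempty (Y ≅ F.obj Z)) ∧
    (∀ (X : C) (Y : D) (g : F.obj X ⟶ Y), Epi g → ∃ Z : C, Nonempty (Y ≅ F.obj Z)) := by
  have hs : ∀ S : C, Simple S → Simple (F.obj S) := by
    intro S hS
    refine aux_simple F S (hss S ⟨1, fun _ => S, fun _ => hS, ?_⟩)
    letI : HasFiniteBiproducts C := HasFiniteBiproducts.of_hasFiniteProducts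
    exact ⟨(biproductUniqueIso (fun _ : Fin 1 => S)).symm⟩
  have hsub : ∀ (X : C) (Y : D) (f : Y ⟶ F.obj X), Mono f → ∃ Z : C, Nonempty (Y ≅ F.obj Z) := by
    intro X
    obtain ⟨N, hN⟩ := hlen X
    exact aux_sub F hlen hs N X hN
  refine ⟨hsub, ?_⟩
  intro X Y g hg
  obtain ⟨Z, ⟨φ⟩⟩ := hsub X _ (kernel.ι g) inferInstance
  obtain ⟨z, hz⟩ := F.map_surjective (φ.inv ≫ kernel.ι g)
  refine ⟨cokernel z, ⟨?_⟩⟩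
  have e1 : Y ≅ cokernel (kernel.ι g) :=
    (Abelian.epiIsCokernelOfKernel _ (kernelIsKernel g)).coconePointUniqueUpToIso
      (colimit.isColimit _)
  have e2 : cokernel (kernel.ι g) ≅ cokernel (F.map z) :=
    cokernel.mapIso _ _ φ (Iso.refl _) (by simp [hz])
  exact e1 ≪≫ e2 ≪≫ (PreservesCokernel.iso F z).symm
end

section
/- Let G be a group, k a field of characteristic 0, and V, W finite-dimensional semisimple k-linear representations of G. Then the tensor product representation V ⊗ W is semisimple. -/
namespace Chev
open scoped InnerProductSpace TensorProduct
open Module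

section A
variable {E : Type*} [NormedAddCommGroup E] [InnerProductSpace ℂ E]

/-- A singular value decomposition with positive singular values `exp (x i)`. -/
def IsSVD {ι : Type*} [Fintype ι] (s : E →ₗ[ℂ] E) (e f : OrthonormalBasis ι ℂ E)
    (x : ι → ℝ) : Prop :=
  ∀ i, s (e i) = ((Real.exp (x i) : ℝ) : ℂ) • f i

lemma exists_svd [FiniteDimensional ℂ E] (s : E →ₗ[ℂ] E) (hs : Function.Injective s) :
    ∃ (e f : OrthonormalBasis (Fin (finrank ℂ E)) ℂ E) (x : Fin (finrank ℂ E) → ℝ),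
      IsSVD s e f x := by
  have hT : (LinearMap.adjoint s ∘ₗ s).IsSymmetric := LinearMap.isSymmetric_adjoint_mul_self s
  let e := hT.eigenvectorBasis rfl
  have hin : ∀ i j, ⟪s (e i), s (e j)⟫_ℂ = (hT.eigenvalues rfl j : ℂ) * ⟪e i, e j⟫_ℂ := by
    intro i j
    rw [← LinearMap.adjoint_inner_right, ← LinearMap.comp_apply,
      hT.apply_eigenvectorBasis rfl j, inner_smul_right]
    rfl
  have hpos : ∀ i, 0 < ‖s (e i)‖ := by
    intro i
    rw [norm_pos_iff]
    intro h
    have := hs (h.trans (map_zero s).symm)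
    have h1 : ‖e i‖ = 1 := e.orthonormal.1 i
    rw [this] at h1; simp at h1
  let f0 : Fin (finrank ℂ E) → E := fun i => ((‖s (e i)‖⁻¹ : ℝ) : ℂ) • s (e i)
  have hf0 : Orthonormal ℂ f0 := by
    constructor
    · intro i
      simp only [f0, norm_smul, Complex.norm_real, norm_inv, norm_norm]
      exact inv_mul_cancel₀ (hpos i).ne'
    · intro i j hij
      simp only [f0, inner_smul_left, inner_smul_right, hin, e.orthonormal.2 hij, mul_zero]
  have hspan : ⊤ ≤ Submodule.span ℂ (Set.range f0) := by
    rw [(hf0.linearIndependent.span_eq_top_of_card_eq_finrank' (by simp))]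
  refine ⟨e, OrthonormalBasis.mk hf0 hspan, fun i => Real.log ‖s (e i)‖, fun i => ?_⟩
  rw [OrthonormalBasis.coe_mk, Real.exp_log (hpos i)]
  simp only [f0, smul_smul]
  rw [← Complex.ofReal_mul, mul_inv_cancel₀ (hpos i).ne']
  simp

lemma jensen {ι : Type*} [Fintype ι] (p x : ι → ℝ) (hp : ∀ i, 0 ≤ p i) (h1 : ∑ i, p i = 1) :
    Real.exp (∑ i, p i * x i) ≤ ∑ i, p i * Real.exp (x i) ∧
    (Real.exp (∑ i, p i * x i) = ∑ i, p i * Real.exp (x i) →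
      ∀ i, p i = 0 ∨ x i = ∑ i, p i * x i) := by
  set m := ∑ i, p i * x i with hm
  have hterm : ∀ i, 0 ≤ p i * (Real.exp (x i) - Real.exp m * (1 + (x i - m))) := by
    intro i
    apply mul_nonneg (hp i)
    have := Real.add_one_le_exp (x i - m)
    have h2 : Real.exp (x i) = Real.exp m * Real.exp (x i - m) := by
      rw [← Real.exp_add]; congr 1; ring
    rw [h2, ← mul_sub]
    apply mul_nonneg (Real.exp_pos _).le; linarith
  have hsum : ∑ i, p i * (Real.exp (x i) - Real.exp m * (1 + (x i - m))) =
      ∑ i, p i * Real.exp (x i) - Real.exp m := by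
    have : ∀ i, p i * (Real.exp (x i) - Real.exp m * (1 + (x i - m))) =
        p i * Real.exp (x i) - Real.exp m * ((1 - m) * p i + p i * x i) := fun i => by ring
    simp only [this]
    rw [Finset.sum_sub_distrib, ← Finset.mul_sum, Finset.sum_add_distrib, ← Finset.mul_sum, h1,
      ← hm]
    ring
  constructor
  · have := Finset.sum_nonneg (fun i (_ : i ∈ Finset.univ) => hterm i)
    linarith
  · intro heq i
    have h0 : ∑ i, p i * (Real.exp (x i) - Real.exp m * (1 + (x i - m))) = 0 := by
      rw [hsum]; linarith
    have hi := (Finset.sum_eq_zero_iff_of_nonneg (fun i _ => hterm i)).1 h0 i (Finset.mem_univ i)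
    rcases mul_eq_zero.1 hi with h | h
    · exact Or.inl h
    · right
      by_contra hne
      have := Real.add_one_lt_exp (sub_ne_zero.2 hne)
      have h2 : Real.exp (x i) = Real.exp m * Real.exp (x i - m) := by
        rw [← Real.exp_add]; congr 1; ring
      rw [h2, ← mul_sub] at h
      rcases mul_eq_zero.1 h with h | h
      · exact (Real.exp_pos _).ne' h
      · linarith

variable {ι : Type*} [Fintype ι]

lemma svd_inner {s : E →ₗ[ℂ] E} {e f : OrthonormalBasis ι ℂ E} {x : ι → ℝ}
    (h : IsSVD s e f x) (i : ι) (v : E) :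
    ⟪f i, s v⟫_ℂ = ((Real.exp (x i) : ℝ) : ℂ) * ⟪e i, v⟫_ℂ := by
  classical
  conv_lhs => rw [← e.sum_repr v]
  simp only [map_sum, map_smul, h _, inner_sum, inner_smul_right]
  rw [Finset.sum_eq_single i]
  · rw [inner_self_eq_norm_sq_to_K, f.orthonormal.1 i]
    rw [e.repr_apply_apply]; simp [mul_comm]
  · intro j _ hj
    rw [f.orthonormal.2 hj.symm]; simp
  · simp

end A
end Chev

namespace Chev
open scoped InnerProductSpace TensorProduct
open Module

section B
variable {E : Type*} [NormedAddCommGroup E] [InnerProductSpace ℂ E]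
variable {ι : Type*} [Fintype ι]

lemma svd_inner_inner {s : E →ₗ[ℂ] E} {e f : OrthonormalBasis ι ℂ E} {x : ι → ℝ}
    (h : IsSVD s e f x) (v w : E) :
    ⟪s v, s w⟫_ℂ = ∑ i, ((Real.exp (2 * x i) : ℝ) : ℂ) * (⟪v, e i⟫_ℂ * ⟪e i, w⟫_ℂ) := by
  rw [← f.sum_inner_mul_inner]
  refine Finset.sum_congr rfl fun i _ => ?_
  rw [← inner_conj_symm, svd_inner h, svd_inner h, map_mul, inner_conj_symm, Complex.conj_ofReal,
    two_mul, Real.exp_add]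
  push_cast; ring

lemma svd_norm_sq {s : E →ₗ[ℂ] E} {e f : OrthonormalBasis ι ℂ E} {x : ι → ℝ}
    (h : IsSVD s e f x) (v : E) :
    ‖s v‖ ^ 2 = ∑ i, ‖⟪e i, v⟫_ℂ‖ ^ 2 * Real.exp (2 * x i) := by
  rw [← f.sum_sq_norm_inner_right]
  refine Finset.sum_congr rfl fun i _ => ?_
  rw [svd_inner h, norm_mul, mul_pow, Complex.norm_real, Real.norm_eq_abs, abs_of_pos (Real.exp_pos _),
    mul_comm, ← Real.exp_nat_mul]
  push_cast; ring_nf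

lemma svd_norm_sq' {s : E →ₗ[ℂ] E} {e f : OrthonormalBasis ι ℂ E} {x : ι → ℝ}
    (h : IsSVD s e f x) (v : E) :
    ‖v‖ ^ 2 = ∑ i, ‖⟪f i, s v⟫_ℂ‖ ^ 2 * Real.exp (2 * -x i) := by
  rw [← e.sum_sq_norm_inner_right]
  refine Finset.sum_congr rfl fun i _ => ?_
  rw [svd_inner h, norm_mul, mul_pow, Complex.norm_real, Real.norm_eq_abs, abs_of_pos (Real.exp_pos _),
    mul_comm, ← mul_assoc, ← Real.exp_nat_mul, ← Real.exp_add]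
  push_cast; ring_nf; simp

lemma proj_norm_sq {κ : Type*} [Fintype κ] (L : Submodule ℂ E) [L.HasOrthogonalProjection]
    (g : OrthonormalBasis κ ℂ L) (v : E) :
    ‖L.orthogonalProjectionOnto v‖ ^ 2 = ∑ j, ‖⟪v, (g j : E)⟫_ℂ‖ ^ 2 := by
  rw [← g.sum_sq_norm_inner_left]
  refine Finset.sum_congr rfl fun i _ => ?_
  congr 2
  rw [Submodule.coe_inner]
  exact Submodule.inner_orthogonalProjectionOnto_eq_of_mem_right (g i) v

lemma svd_ineq [FiniteDimensional ℂ E] (L : Submodule ℂ E) {s : E →ₗ[ℂ] E}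
    (hs : Function.Injective s) (hL : ∀ v ∈ L, s v ∈ L)
    {e f : OrthonormalBasis ι ℂ E} {x : ι → ℝ} (h : IsSVD s e f x) :
    ∑ i, x i * ‖L.orthogonalProjectionOnto (e i)‖ ^ 2 ≤ ∑ i, x i * ‖L.orthogonalProjectionOnto (f i)‖ ^ 2 ∧
    (∑ i, x i * ‖L.orthogonalProjectionOnto (e i)‖ ^ 2 = ∑ i, x i * ‖L.orthogonalProjectionOnto (f i)‖ ^ 2 →
      ∀ w ∈ Lᗮ, s w ∈ Lᗮ) := by
  obtain ⟨g, g', σ, hg⟩ := exists_svd (s.restrict hL) (fun a b hab => by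
    have := congrArg Subtype.val hab
    exact Subtype.ext (hs this))
  have hg1 : ∀ j, s (g j : E) = ((Real.exp (σ j) : ℝ) : ℂ) • (g' j : E) := fun j =>
    congrArg Subtype.val (hg j)
  have hgn : ∀ j, ‖(g j : E)‖ = 1 := fun j => g.orthonormal.1 j
  have hgn' : ∀ j, ‖(g' j : E)‖ = 1 := fun j => g'.orthonormal.1 j
  have hE : ∀ j, Real.exp (∑ i, ‖⟪e i, (g j : E)⟫_ℂ‖ ^ 2 * (2 * x i)) ≤ Real.exp (2 * σ j) ∧
      (Real.exp (∑ i, ‖⟪e i, (g j : E)⟫_ℂ‖ ^ 2 * (2 * x i)) = Real.exp (2 * σ j) →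
      ∀ i, ‖⟪e i, (g j : E)⟫_ℂ‖ ^ 2 = 0 ∨ 2 * x i = ∑ i, ‖⟪e i, (g j : E)⟫_ℂ‖ ^ 2 * (2 * x i)) := by
    intro j
    have h1 := jensen (fun i => ‖⟪e i, (g j : E)⟫_ℂ‖ ^ 2) (fun i => 2 * x i)
      (fun i => by positivity) (by rw [e.sum_sq_norm_inner_right, hgn]; norm_num)
    rw [← svd_norm_sq h, hg1, norm_smul, hgn', Complex.norm_real, Real.norm_eq_abs, abs_of_pos (Real.exp_pos _),
      mul_one, ← Real.exp_nat_mul] at h1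
    exact h1
  have hF : ∀ j, Real.exp (∑ i, ‖⟪f i, (g' j : E)⟫_ℂ‖ ^ 2 * (2 * - x i)) ≤ Real.exp (2 * - σ j) := by
    intro j
    have h1 := (jensen (fun i => ‖⟪f i, (g' j : E)⟫_ℂ‖ ^ 2) (fun i => 2 * - x i)
      (fun i => by positivity) (by rw [f.sum_sq_norm_inner_right, hgn']; norm_num)).1
    have h2 : (g' j : E) = s (((Real.exp (- σ j) : ℝ) : ℂ) • (g j : E)) := by
      rw [map_smul, hg1, smul_smul, ← Complex.ofReal_mul, ← Real.exp_add]; simp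
    have h3 := svd_norm_sq' h (((Real.exp (- σ j) : ℝ) : ℂ) • (g j : E))
    rw [← h2, norm_smul, hgn, Complex.norm_real, Real.norm_eq_abs, abs_of_pos (Real.exp_pos _),
      mul_one, ← Real.exp_nat_mul] at h3
    rw [← h3] at h1
    exact h1
  have hE' : ∀ j, ∑ i, x i * ‖⟪e i, (g j : E)⟫_ℂ‖ ^ 2 ≤ σ j := by
    intro j
    have := Real.exp_le_exp.1 (hE j).1
    have h2 : ∑ i, ‖⟪e i, (g j : E)⟫_ℂ‖ ^ 2 * (2 * x i) = 2 * ∑ i, x i * ‖⟪e i, (g j : E)⟫_ℂ‖ ^ 2 := by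
      rw [Finset.mul_sum]; exact Finset.sum_congr rfl fun i _ => by ring
    linarith
  have hF' : ∀ j, σ j ≤ ∑ i, x i * ‖⟪f i, (g' j : E)⟫_ℂ‖ ^ 2 := by
    intro j
    have := Real.exp_le_exp.1 (hF j)
    have h2 : ∑ i, ‖⟪f i, (g' j : E)⟫_ℂ‖ ^ 2 * (2 * - x i) =
        - (2 * ∑ i, x i * ‖⟪f i, (g' j : E)⟫_ℂ‖ ^ 2) := by
      rw [Finset.mul_sum, ← Finset.sum_neg_distrib]; exact Finset.sum_congr rfl fun i _ => by ring
    linarith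
  have e1 : ∑ i, x i * ‖L.orthogonalProjectionOnto (e i)‖ ^ 2 =
      ∑ j, ∑ i, x i * ‖⟪e i, (g j : E)⟫_ℂ‖ ^ 2 := by
    rw [Finset.sum_comm]
    exact Finset.sum_congr rfl fun i _ => by rw [proj_norm_sq L g, Finset.mul_sum]
  have e2 : ∑ i, x i * ‖L.orthogonalProjectionOnto (f i)‖ ^ 2 =
      ∑ j, ∑ i, x i * ‖⟪f i, (g' j : E)⟫_ℂ‖ ^ 2 := by
    rw [Finset.sum_comm]
    exact Finset.sum_congr rfl fun i _ => by rw [proj_norm_sq L g', Finset.mul_sum]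
  have k1 : ∑ j, ∑ i, x i * ‖⟪e i, (g j : E)⟫_ℂ‖ ^ 2 ≤ ∑ j, σ j :=
    Finset.sum_le_sum fun j _ => hE' j
  have k2 : ∑ j, σ j ≤ ∑ j, ∑ i, x i * ‖⟪f i, (g' j : E)⟫_ℂ‖ ^ 2 :=
    Finset.sum_le_sum fun j _ => hF' j
  rw [e1, e2]
  refine ⟨k1.trans k2, fun heq w hw => ?_⟩
  have k3 : ∑ j, ∑ i, x i * ‖⟪e i, (g j : E)⟫_ℂ‖ ^ 2 = ∑ j, σ j := le_antisymm k1 (k2.trans heq.ge)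
  have k4 := (Finset.sum_eq_sum_iff_of_le fun j _ => hE' j).1 k3
  have k5 : ∀ j i, ⟪e i, (g j : E)⟫_ℂ = 0 ∨ x i = σ j := by
    intro j i
    have h2 : ∑ i, ‖⟪e i, (g j : E)⟫_ℂ‖ ^ 2 * (2 * x i) = 2 * σ j := by
      rw [← k4 j (Finset.mem_univ j), Finset.mul_sum]; exact Finset.sum_congr rfl fun i _ => by ring
    rcases (hE j).2 (by rw [h2]) i with h | h
    · left; simpa using h
    · right; rw [h2] at h; linarith
  have k6 : ∀ j, ⟪(g' j : E), s w⟫_ℂ = 0 := by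
    intro j
    have hz : ⟪s (g j : E), s w⟫_ℂ = 0 := by
      rw [svd_inner_inner h]
      have : ∀ i, ((Real.exp (2 * x i) : ℝ) : ℂ) * (⟪(g j : E), e i⟫_ℂ * ⟪e i, w⟫_ℂ) =
          ((Real.exp (2 * σ j) : ℝ) : ℂ) * (⟪(g j : E), e i⟫_ℂ * ⟪e i, w⟫_ℂ) := by
        intro i
        rcases k5 j i with h | h
        · have : ⟪(g j : E), e i⟫_ℂ = 0 := by rw [← inner_conj_symm, h, map_zero]
          simp [this]
        · rw [h]
      simp only [this]
      rw [← Finset.mul_sum, e.sum_inner_mul_inner, Submodule.inner_right_of_mem_orthogonal (g j).2 hw,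
        mul_zero]
    rw [hg1, inner_smul_left] at hz
    rcases mul_eq_zero.1 hz with h | h
    · simp at h
    · exact h
  have k7 : L.orthogonalProjectionOnto (s w) = 0 := by
    have := proj_norm_sq L g' (s w)
    have h0 : ∑ j, ‖⟪s w, (g' j : E)⟫_ℂ‖ ^ 2 = 0 := by
      apply Finset.sum_eq_zero; intro j _
      rw [← inner_conj_symm, k6]; simp
    rw [h0] at this
    exact norm_eq_zero.1 (pow_eq_zero_iff (two_ne_zero) |>.1 this)
  rwa [Submodule.orthogonalProjectionOnto_eq_zero_iff] at k7

/-- A family of operators is balanced if the sums of the logarithms of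
`s* s` and of `s s*` agree. -/
def Balanced {κ : Type*} [Fintype κ] (s : κ → E →ₗ[ℂ] E) : Prop :=
  ∃ X Y : κ → E →ₗ[ℂ] E,
    (∀ a, ∃ (n : Type) (_ : Fintype n) (e f : OrthonormalBasis n ℂ E) (x : n → ℝ),
      IsSVD (s a) e f x ∧ (∀ i, X a (e i) = ((x i : ℝ) : ℂ) • e i) ∧
        ∀ i, Y a (f i) = ((x i : ℝ) : ℂ) • f i) ∧ ∑ a, X a = ∑ a, Y a

lemma trace_proj (L : Submodule ℂ E) [L.HasOrthogonalProjection] {X : E →ₗ[ℂ] E}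
    {e : OrthonormalBasis ι ℂ E} {x : ι → ℝ} (hX : ∀ i, X (e i) = ((x i : ℝ) : ℂ) • e i) :
    (LinearMap.trace ℂ E (L.starProjection.toLinearMap ∘ₗ X)).re =
    ∑ i, x i * ‖L.orthogonalProjectionOnto (e i)‖ ^ 2 := by
  classical
  rw [LinearMap.trace_eq_sum_inner _ e, Complex.re_sum]
  refine Finset.sum_congr rfl fun i _ => ?_
  simp only [LinearMap.comp_apply, hX, map_smul, inner_smul_right]
  have : ⟪e i, L.starProjection (e i)⟫_ℂ = ((‖L.orthogonalProjectionOnto (e i)‖ ^ 2 : ℝ) : ℂ) := by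
    rw [Submodule.starProjection_apply, ← Submodule.inner_orthogonalProjectionOnto_eq_of_mem_right,
      inner_self_eq_norm_sq_to_K]
    simp
  erw [this]
  rw [← Complex.ofReal_mul, Complex.ofReal_re]

theorem Balanced.orthogonal [FiniteDimensional ℂ E] {κ : Type*} [Fintype κ] {s : κ → E →ₗ[ℂ] E}
    (hs : ∀ a, Function.Injective (s a)) (hb : Balanced s) (L : Submodule ℂ E)
    (hL : ∀ a, ∀ v ∈ L, s a v ∈ L) : ∀ a, ∀ w ∈ Lᗮ, s a w ∈ Lᗮ := by
  obtain ⟨X, Y, h, hXY⟩ := hb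
  have key : ∀ a, (LinearMap.trace ℂ E (L.starProjection.toLinearMap ∘ₗ X a)).re ≤
      (LinearMap.trace ℂ E (L.starProjection.toLinearMap ∘ₗ Y a)).re ∧
      ((LinearMap.trace ℂ E (L.starProjection.toLinearMap ∘ₗ X a)).re =
      (LinearMap.trace ℂ E (L.starProjection.toLinearMap ∘ₗ Y a)).re → ∀ w ∈ Lᗮ, s a w ∈ Lᗮ) := by
    intro a
    obtain ⟨n, _, e, f, x, h1, h2, h3⟩ := h a
    rw [trace_proj L h2, trace_proj L h3]
    exact svd_ineq L (hs a) (hL a) h1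
  have hsum : ∀ Z : κ → E →ₗ[ℂ] E,
      ∑ a, (LinearMap.trace ℂ E (L.starProjection.toLinearMap ∘ₗ Z a)).re =
      (LinearMap.trace ℂ E (L.starProjection.toLinearMap ∘ₗ (∑ a, Z a))).re := by
    intro Z
    rw [← Complex.re_sum, ← map_sum]
    congr 2
    ext v
    simp [LinearMap.sum_apply]
  have heq := (Finset.sum_eq_sum_iff_of_le fun a _ => (key a).1).1
    ((hsum X).trans ((congrArg _ (by rw [hXY])).trans (hsum Y).symm))
  exact fun a => (key a).2 (heq a (Finset.mem_univ a))

theorem Balanced.tensor [FiniteDimensional ℂ E] {F : Type*} [NormedAddCommGroup F]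
    [InnerProductSpace ℂ F] [FiniteDimensional ℂ F] {κ : Type*} [Fintype κ] {s : κ → E →ₗ[ℂ] E}
    {t : κ → F →ₗ[ℂ] F} (hs : Balanced s) (ht : Balanced t) :
    Balanced (fun a => TensorProduct.map (s a) (t a)) := by
  obtain ⟨X, Y, h, hXY⟩ := hs
  obtain ⟨X', Y', h', hXY'⟩ := ht
  refine ⟨fun a => (X a).rTensor F + (X' a).lTensor E, fun a => (Y a).rTensor F + (Y' a).lTensor E,
    fun a => ?_, ?_⟩
  · obtain ⟨n, _, e, f, x, h1, h2, h3⟩ := h a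
    obtain ⟨n', _, e', f', x', h1', h2', h3'⟩ := h' a
    refine ⟨n × n', inferInstance, e.tensorProduct e', f.tensorProduct f',
      fun i => x i.1 + x' i.2, ?_, ?_, ?_⟩
    · rintro ⟨i, j⟩
      simp only [OrthonormalBasis.tensorProduct_apply, TensorProduct.map_tmul, h1 i, h1' j,
        TensorProduct.smul_tmul_smul]
      rw [Real.exp_add]; push_cast; rfl
    · rintro ⟨i, j⟩
      simp [OrthonormalBasis.tensorProduct_apply, h2, h2', TensorProduct.smul_tmul, ← TensorProduct.tmul_smul, add_smul]
    · rintro ⟨i, j⟩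
      simp [OrthonormalBasis.tensorProduct_apply, h3, h3', TensorProduct.smul_tmul, ← TensorProduct.tmul_smul, add_smul]
  · have h1 := congrArg (LinearMap.rTensorHom F) hXY
    have h2 := congrArg (LinearMap.lTensorHom E) hXY'
    simp only [map_sum] at h1 h2
    rw [Finset.sum_add_distrib, Finset.sum_add_distrib]
    exact congrArg₂ (· + ·) h1 h2

end B
end Chev

namespace Chev
open scoped InnerProductSpace TensorProduct Topology
open Module

section C
variable {E : Type*} [NormedAddCommGroup E] [InnerProductSpace ℂ E]

lemma scalar_expansion {a R x y : ℝ} (ha : 0 < a) (hx : |x| ≤ R) (h1 : a ≤ Real.exp (2 * x))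
    (h2 : a ≤ Real.exp (2 * y)) :
    |y ^ 2 - x ^ 2 - x * Real.exp (-(2 * x)) * (Real.exp (2 * y) - Real.exp (2 * x))| ≤
      ((1 + 4 * R) / a ^ 2) * (Real.exp (2 * y) - Real.exp (2 * x)) ^ 2 := by
  set α := Real.exp (2 * y) with hα
  set β := Real.exp (2 * x) with hβ
  have hα0 : 0 < α := Real.exp_pos _
  have hβ0 : 0 < β := Real.exp_pos _
  have hR : 0 ≤ R := (abs_nonneg x).trans hx
  rw [Real.exp_neg, ← hβ]
  -- `d = log (α / β)`
  set d := 2 * y - 2 * x with hd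
  have hdexp : Real.exp d = α / β := by rw [hd, Real.exp_sub]
  have hdexp' : Real.exp (-d) = β / α := by rw [Real.exp_neg, hdexp, inv_div]
  have u1 : d ≤ (α - β) / β := by
    have := Real.add_one_le_exp d
    rw [hdexp] at this
    have : (α - β) / β = α / β - 1 := by field_simp
    linarith
  have u2 : (α - β) / α ≤ d := by
    have := Real.add_one_le_exp (-d)
    rw [hdexp'] at this
    have : (α - β) / α = 1 - β / α := by field_simp
    linarith
  set q := (α - β) ^ 2 / a ^ 2 with hq
  have hq0 : 0 ≤ q := by positivity
  have v1 : (α - β) ^ 2 / (α * β) ≤ q := by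
    apply div_le_div_of_nonneg_left (by positivity) (by positivity)
    nlinarith
  have v2 : |d| ≤ |α - β| / a := by
    rw [abs_le]
    constructor
    · refine le_trans ?_ u2
      rw [← neg_div, div_le_div_iff₀ ha hα0]
      have := neg_abs_le (α - β)
      have := abs_nonneg (α - β)
      nlinarith
    · refine u1.trans ?_
      rw [div_le_div_iff₀ hβ0 ha]
      have := le_abs_self (α - β)
      have := abs_nonneg (α - β)
      nlinarith
  have v3 : d ^ 2 ≤ q := by
    have : |d| ^ 2 ≤ (|α - β| / a) ^ 2 := pow_le_pow_left₀ (abs_nonneg _) v2 2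
    rwa [sq_abs, div_pow, sq_abs] at this
  have v4 : |d - (α - β) / β| ≤ q := by
    have e1 : (α - β) / β - (α - β) / α = (α - β) ^ 2 / (α * β) := by field_simp
    rw [abs_le]; constructor <;> linarith
  have e2 : y ^ 2 - x ^ 2 - x * β⁻¹ * (α - β) = d ^ 2 / 4 + x * (d - (α - β) / β) := by
    have : y = d / 2 + x := by rw [hd]; ring
    rw [this]; field_simp; ring
  rw [e2]
  have e3 : (1 + 4 * R) / a ^ 2 * (α - β) ^ 2 = (1 + 4 * R) * q := by rw [hq]; ring
  rw [e3]
  refine (abs_add_le _ _).trans ?_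
  rw [abs_mul, abs_of_nonneg (by positivity : 0 ≤ d ^ 2 / 4)]
  have := mul_le_mul hx v4 (abs_nonneg _) hR
  nlinarith

variable [FiniteDimensional ℂ E] [CompleteSpace E]

lemma svd_lower {ι : Type*} [Fintype ι] {s : E →ₗ[ℂ] E} {e f : OrthonormalBasis ι ℂ E} {x : ι → ℝ}
    (h : IsSVD s e f x) (v : E) : Real.exp (- ∑ i, |x i|) * ‖v‖ ≤ ‖s v‖ := by
  have h0 : (Real.exp (- ∑ i, |x i|) * ‖v‖) ^ 2 ≤ ‖s v‖ ^ 2 := by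
    rw [svd_norm_sq h, mul_pow, ← e.sum_sq_norm_inner_right v, Finset.mul_sum]
    refine Finset.sum_le_sum fun i _ => ?_
    rw [mul_comm]
    refine mul_le_mul_of_nonneg_left ?_ (by positivity)
    rw [← Real.exp_nat_mul, Real.exp_le_exp]
    have h1 := Finset.single_le_sum (fun i _ => abs_nonneg (x i)) (Finset.mem_univ i)
    have h2 := neg_abs_le (x i)
    push_cast; linarith
  exact le_of_sq_le_sq h0 (norm_nonneg _) |> id

lemma svd_upper {ι : Type*} [Fintype ι] {s : E →ₗ[ℂ] E} {e f : OrthonormalBasis ι ℂ E} {x : ι → ℝ}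
    (h : IsSVD s e f x) (v : E) : ‖s v‖ ≤ Real.exp (√(∑ i, x i ^ 2)) * ‖v‖ := by
  have h0 : ‖s v‖ ^ 2 ≤ (Real.exp (√(∑ i, x i ^ 2)) * ‖v‖) ^ 2 := by
    rw [svd_norm_sq h, mul_pow, ← e.sum_sq_norm_inner_right v, Finset.mul_sum]
    refine Finset.sum_le_sum fun i _ => ?_
    rw [mul_comm]
    refine mul_le_mul_of_nonneg_right ?_ (by positivity)
    rw [← Real.exp_nat_mul, Real.exp_le_exp]
    have h1 := Finset.single_le_sum (fun i _ => sq_nonneg (x i)) (Finset.mem_univ i)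
    have h2 := Real.le_sqrt_of_sq_le h1
    push_cast; linarith
  exact le_of_sq_le_sq h0 (by positivity)

lemma expansion {ι : Type*} [Fintype ι] {B₀ : E →L[ℂ] E} {e f : OrthonormalBasis ι ℂ E}
    {x : ι → ℝ} (h : IsSVD B₀.toLinearMap e f x) :
    ∃ C : ℝ, ∀ᶠ B : E →L[ℂ] E in 𝓝 B₀, Function.Injective B ∧
      ∀ (b c : OrthonormalBasis (Fin (finrank ℂ E)) ℂ E) (y : Fin (finrank ℂ E) → ℝ),
      IsSVD B.toLinearMap b c y →
      |∑ i, y i ^ 2 - ∑ j, x j ^ 2 -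
        ∑ j, x j * Real.exp (-(2 * x j)) * (‖B (e j)‖ ^ 2 - ‖B₀ (e j)‖ ^ 2)| ≤
      C * ‖ContinuousLinearMap.adjoint B * B - ContinuousLinearMap.adjoint B₀ * B₀‖ ^ 2 := by
  set R := ∑ i, |x i| with hR
  set m := Real.exp (-R) with hm
  have hm0 : 0 < m := Real.exp_pos _
  set a := (m / 2) ^ 2 with ha
  have ha0 : 0 < a := by positivity
  have hx : ∀ j, |x j| ≤ R := fun j =>
    Finset.single_le_sum (fun i _ => abs_nonneg (x i)) (Finset.mem_univ j)
  refine ⟨((1 + 4 * R) / a ^ 2) * Fintype.card ι, ?_⟩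
  filter_upwards [Metric.ball_mem_nhds B₀ (half_pos hm0)] with B hB
  rw [mem_ball_iff_norm] at hB
  have hlow : ∀ v, m / 2 * ‖v‖ ≤ ‖B v‖ := by
    intro v
    have h1 := svd_lower h v
    have h2 := (B - B₀).le_opNorm v
    have h3 : ‖B₀ v‖ ≤ ‖B v‖ + ‖(B - B₀) v‖ := by
      have : B₀ v = B v - (B - B₀) v := by simp
      rw [this]; exact norm_sub_le _ _
    have h4 : ‖B - B₀‖ * ‖v‖ ≤ m / 2 * ‖v‖ := mul_le_mul_of_nonneg_right hB.le (norm_nonneg _)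
    change m * ‖v‖ ≤ ‖B₀ v‖ at h1
    linarith
  constructor
  · rw [injective_iff_map_eq_zero]
    intro v hv
    have := hlow v
    rw [hv, norm_zero] at this
    have h2 := norm_nonneg v
    have : ‖v‖ = 0 := by nlinarith
    simpa using this
  intro b c y hy
  have hβ : ∀ j, a ≤ Real.exp (2 * x j) := by
    intro j
    have h1 : m ^ 2 ≤ Real.exp (2 * x j) := by
      rw [hm, ← Real.exp_nat_mul, Real.exp_le_exp]
      have := hx j
      have := neg_abs_le (x j)
      push_cast; linarith
    have : a ≤ m ^ 2 := by rw [ha]; nlinarith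
    linarith
  have hα : ∀ i, a ≤ Real.exp (2 * y i) := by
    intro i
    have h1 := hlow (b i)
    have h2 : ‖B (b i)‖ = Real.exp (y i) := by
      have := congrArg norm (hy i)
      rw [norm_smul, c.orthonormal.1, Complex.norm_real, Real.norm_eq_abs,
        abs_of_pos (Real.exp_pos _), mul_one] at this
      exact this
    rw [h2, b.orthonormal.1, mul_one] at h1
    have h3 : (m / 2) ^ 2 ≤ Real.exp (y i) ^ 2 := pow_le_pow_left₀ (by positivity) h1 2
    rw [← Real.exp_nat_mul] at h3
    exact h3
  set p : Fin (finrank ℂ E) → ι → ℝ := fun i j => ‖⟪b i, e j⟫_ℂ‖ ^ 2 with hp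
  have hp1 : ∀ j, ∑ i, p i j = 1 := fun j => by
    simp only [hp]; rw [b.sum_sq_norm_inner_right, e.orthonormal.1]; norm_num
  have hp2 : ∀ i, ∑ j, p i j = 1 := fun i => by
    simp only [hp]; rw [e.sum_sq_norm_inner_left, b.orthonormal.1]; norm_num
  have hBe : ∀ j, ‖B (e j)‖ ^ 2 = ∑ i, p i j * Real.exp (2 * y i) := fun j => svd_norm_sq hy (e j)
  have hB₀e : ∀ j, ‖B₀ (e j)‖ ^ 2 = Real.exp (2 * x j) := by
    intro j
    have := congrArg norm (h j)
    rw [norm_smul, f.orthonormal.1, Complex.norm_real, Real.norm_eq_abs,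
      abs_of_pos (Real.exp_pos _), mul_one] at this
    have h2 : ‖B₀ (e j)‖ = Real.exp (x j) := this
    rw [h2, ← Real.exp_nat_mul]; norm_num
  have hM₀ : ∀ j v, ⟪v, (ContinuousLinearMap.adjoint B₀ * B₀) (e j)⟫_ℂ =
      ((Real.exp (2 * x j) : ℝ) : ℂ) * ⟪v, e j⟫_ℂ := by
    intro j v
    have h1 : B₀ (e j) = ((Real.exp (x j) : ℝ) : ℂ) • f j := h j
    have h2 : ⟪f j, B₀ v⟫_ℂ = _ := svd_inner h j v
    rw [ContinuousLinearMap.mul_apply, ContinuousLinearMap.adjoint_inner_right, h1, inner_smul_right,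
      ← inner_conj_symm, h2, map_mul, inner_conj_symm, Complex.conj_ofReal, two_mul, Real.exp_add]
    push_cast; ring
  have hM : ∀ i v, ⟪b i, (ContinuousLinearMap.adjoint B * B) v⟫_ℂ =
      ((Real.exp (2 * y i) : ℝ) : ℂ) * ⟪b i, v⟫_ℂ := by
    intro i v
    have h1 : B (b i) = ((Real.exp (y i) : ℝ) : ℂ) • c i := hy i
    have h2 : ⟪c i, B v⟫_ℂ = _ := svd_inner hy i v
    rw [ContinuousLinearMap.mul_apply, ContinuousLinearMap.adjoint_inner_right, h1, inner_smul_left,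
      h2, Complex.conj_ofReal, two_mul, Real.exp_add]
    push_cast; ring
  set D := ContinuousLinearMap.adjoint B * B - ContinuousLinearMap.adjoint B₀ * B₀ with hD
  have hDe : ∀ j, ∑ i, p i j * (Real.exp (2 * y i) - Real.exp (2 * x j)) ^ 2 ≤ ‖D‖ ^ 2 := by
    intro j
    have h1 : ∑ i, p i j * (Real.exp (2 * y i) - Real.exp (2 * x j)) ^ 2 = ‖D (e j)‖ ^ 2 := by
      rw [← b.sum_sq_norm_inner_right]
      refine Finset.sum_congr rfl fun i _ => ?_
      rw [hD, ContinuousLinearMap.sub_apply, inner_sub_right, hM, hM₀, ← sub_mul, norm_mul, mul_pow,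
        ← Complex.ofReal_sub, Complex.norm_real, Real.norm_eq_abs, sq_abs, mul_comm]
    rw [h1]
    have := D.le_opNorm (e j)
    rw [e.orthonormal.1, mul_one] at this
    exact pow_le_pow_left₀ (norm_nonneg _) this 2
  have hkey : ∑ i, y i ^ 2 - ∑ j, x j ^ 2 -
        ∑ j, x j * Real.exp (-(2 * x j)) * (‖B (e j)‖ ^ 2 - ‖B₀ (e j)‖ ^ 2) =
      ∑ j, ∑ i, p i j * (y i ^ 2 - x j ^ 2 - x j * Real.exp (-(2 * x j)) *
        (Real.exp (2 * y i) - Real.exp (2 * x j))) := by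
    have e1 : ∑ i, y i ^ 2 = ∑ j, ∑ i, p i j * y i ^ 2 := by
      rw [Finset.sum_comm]
      exact Finset.sum_congr rfl fun i _ => by rw [← Finset.sum_mul, hp2, one_mul]
    rw [e1, ← Finset.sum_sub_distrib, ← Finset.sum_sub_distrib]
    refine Finset.sum_congr rfl fun j _ => ?_
    rw [hBe, hB₀e]
    have e2 : ∀ i, p i j * (y i ^ 2 - x j ^ 2 - x j * Real.exp (-(2 * x j)) *
        (Real.exp (2 * y i) - Real.exp (2 * x j))) = p i j * y i ^ 2 - p i j * x j ^ 2 -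
        (x j * Real.exp (-(2 * x j)) * (p i j * Real.exp (2 * y i)) -
         p i j * (x j * Real.exp (-(2 * x j)) * Real.exp (2 * x j))) := fun i => by ring
    simp only [e2]
    rw [Finset.sum_sub_distrib, Finset.sum_sub_distrib, Finset.sum_sub_distrib, ← Finset.mul_sum,
      ← Finset.sum_mul, ← Finset.sum_mul, hp1]
    ring
  rw [hkey]
  refine (Finset.abs_sum_le_sum_abs _ _).trans ?_
  have hR0 : 0 ≤ R := Finset.sum_nonneg fun i _ => abs_nonneg _
  calc _ ≤ ∑ j : ι, ((1 + 4 * R) / a ^ 2) * ‖D‖ ^ 2 := by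
        refine Finset.sum_le_sum fun j _ => ?_
        refine (Finset.abs_sum_le_sum_abs _ _).trans ?_
        refine le_trans ?_ (mul_le_mul_of_nonneg_left (hDe j) (by positivity))
        rw [Finset.mul_sum]
        refine Finset.sum_le_sum fun i _ => ?_
        have hpn : 0 ≤ p i j := by simp only [hp]; positivity
        rw [abs_mul, abs_of_nonneg hpn]
        have := mul_le_mul_of_nonneg_left (scalar_expansion ha0 (hx j) (hβ j) (hα i)) hpn
        linarith
    _ = _ := by
        rw [Finset.sum_const, Finset.card_univ, nsmul_eq_mul]; ring

end C
end Chev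

namespace Chev
open scoped InnerProductSpace TensorProduct Topology
open Module

section D
variable {E : Type*} [NormedAddCommGroup E] [InnerProductSpace ℂ E] [FiniteDimensional ℂ E]
  [CompleteSpace E]

open Classical in
noncomputable def Phi (B : E →L[ℂ] E) : ℝ :=
  if h : Function.Injective B then
    ∑ i, ((exists_svd B.toLinearMap h).choose_spec.choose_spec.choose i) ^ 2 else 0

lemma Phi_spec {B : E →L[ℂ] E} (h : Function.Injective B) :
    ∃ (b c : OrthonormalBasis (Fin (finrank ℂ E)) ℂ E) (y : Fin (finrank ℂ E) → ℝ),
      IsSVD B.toLinearMap b c y ∧ Phi B = ∑ i, y i ^ 2 := by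
  refine ⟨_, _, _, (exists_svd B.toLinearMap h).choose_spec.choose_spec.choose_spec, ?_⟩
  rw [Phi, dif_pos h]

lemma Phi_expansion {B₀ : E →L[ℂ] E} {e f : OrthonormalBasis (Fin (finrank ℂ E)) ℂ E}
    {x : Fin (finrank ℂ E) → ℝ} (h : IsSVD B₀.toLinearMap e f x) (hP : Phi B₀ = ∑ i, x i ^ 2) :
    ∃ C : ℝ, ∀ᶠ B : E →L[ℂ] E in 𝓝 B₀,
      |Phi B - Phi B₀ -
        ∑ j, x j * Real.exp (-(2 * x j)) * (‖B (e j)‖ ^ 2 - ‖B₀ (e j)‖ ^ 2)| ≤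
      C * ‖ContinuousLinearMap.adjoint B * B - ContinuousLinearMap.adjoint B₀ * B₀‖ ^ 2 := by
  obtain ⟨C, hC⟩ := expansion h
  refine ⟨C, hC.mono fun B hB => ?_⟩
  obtain ⟨b, c, y, hy, hPy⟩ := Phi_spec hB.1
  rw [hP, hPy]
  exact hB.2 b c y hy

lemma Phi_continuousAt {B₀ : E →L[ℂ] E} (h : Function.Injective B₀) : ContinuousAt Phi B₀ := by
  obtain ⟨e, f, x, hx, hP⟩ := Phi_spec h
  obtain ⟨C, hC⟩ := Phi_expansion hx hP
  have h1 : Filter.Tendsto (fun B : E →L[ℂ] E =>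
      C * ‖ContinuousLinearMap.adjoint B * B - ContinuousLinearMap.adjoint B₀ * B₀‖ ^ 2)
      (𝓝 B₀) (𝓝 0) := by
    have : Continuous (fun B : E →L[ℂ] E =>
      C * ‖ContinuousLinearMap.adjoint B * B - ContinuousLinearMap.adjoint B₀ * B₀‖ ^ 2) := by
      have := (ContinuousLinearMap.adjoint (𝕜 := ℂ) (E := E) (F := E)).continuous
      fun_prop
    simpa using this.tendsto B₀
  have h2 : Filter.Tendsto (fun B : E →L[ℂ] E =>
      ∑ j, x j * Real.exp (-(2 * x j)) * (‖B (e j)‖ ^ 2 - ‖B₀ (e j)‖ ^ 2)) (𝓝 B₀) (𝓝 0) := by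
    have : Continuous (fun B : E →L[ℂ] E =>
      ∑ j, x j * Real.exp (-(2 * x j)) * (‖B (e j)‖ ^ 2 - ‖B₀ (e j)‖ ^ 2)) := by fun_prop
    simpa using this.tendsto B₀
  have h3 := (squeeze_zero_norm' (by simpa [Real.norm_eq_abs] using hC) h1).add h2
  have h4 : Filter.Tendsto (fun B : E →L[ℂ] E => Phi B - Phi B₀) (𝓝 B₀) (𝓝 0) := by
    simpa using h3
  simpa [ContinuousAt] using h4.add_const (Phi B₀)

lemma Phi_hasDerivAt {B : ℝ → E →L[ℂ] E} {B' : E →L[ℂ] E}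
    (hB : HasDerivAt B B' 0) {e f : OrthonormalBasis (Fin (finrank ℂ E)) ℂ E}
    {x : Fin (finrank ℂ E) → ℝ} (h : IsSVD (B 0).toLinearMap e f x)
    (hP : Phi (B 0) = ∑ i, x i ^ 2) :
    HasDerivAt (fun t => Phi (B t))
      (∑ j, x j * Real.exp (-(2 * x j)) * (2 * (⟪B 0 (e j), B' (e j)⟫_ℂ).re)) 0 := by
  obtain ⟨C, hC⟩ := Phi_expansion h hP
  have hq : ∀ j, HasDerivAt (fun t => ‖B t (e j)‖ ^ 2) (2 * (⟪B 0 (e j), B' (e j)⟫_ℂ).re) 0 := by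
    intro j
    have h1 : HasDerivAt (fun t => B t (e j)) (B' (e j)) 0 := by
      have := (((ContinuousLinearMap.apply ℂ E (e j)).restrictScalars ℝ).hasFDerivAt
        (x := B 0)).comp_hasDerivAt (0:ℝ) hB
      simpa [Function.comp_def] using this
    have h2 := h1.inner ℂ h1
    have h3 := (Complex.reCLM.hasFDerivAt (x := ⟪B 0 (e j), B 0 (e j)⟫_ℂ)).comp_hasDerivAt (0:ℝ) h2
    have e1 : (fun t => ‖B t (e j)‖ ^ 2) = (⇑Complex.reCLM ∘ fun t => ⟪B t (e j), B t (e j)⟫_ℂ) := by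
      funext t
      simp [Function.comp, inner_self_eq_norm_sq_to_K, ← Complex.ofReal_pow]
    rw [e1]
    refine HasDerivAt.congr_deriv h3 ?_
    have := inner_re_symm (𝕜 := ℂ) (B' (e j)) (B 0 (e j))
    change (⟪B 0 (e j), B' (e j)⟫_ℂ + ⟪B' (e j), B 0 (e j)⟫_ℂ).re = _
    rw [Complex.add_re]
    have this' : (⟪B' (e j), B 0 (e j)⟫_ℂ).re = (⟪B 0 (e j), B' (e j)⟫_ℂ).re := this
    rw [this']
    ring
  have hl : HasDerivAt (fun t => ∑ j, x j * Real.exp (-(2 * x j)) *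
      (‖B t (e j)‖ ^ 2 - ‖B 0 (e j)‖ ^ 2))
      (∑ j, x j * Real.exp (-(2 * x j)) * (2 * (⟪B 0 (e j), B' (e j)⟫_ℂ).re)) 0 := by
    refine HasDerivAt.fun_sum fun j _ => ?_
    exact ((hq j).sub_const _).const_mul _
  have hM : (fun t => ContinuousLinearMap.adjoint (B t) * B t -
      ContinuousLinearMap.adjoint (B 0) * B 0) =O[𝓝 0] (fun t : ℝ => t - 0) := by
    have h1 : HasDerivAt (fun t => ContinuousLinearMap.adjoint (B t))
        (ContinuousLinearMap.adjoint B') 0 := by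
      have := (hB.star)
      simpa [ContinuousLinearMap.star_eq_adjoint] using this
    exact (h1.mul hB).differentiableAt.isBigO_sub
  have hr : HasDerivAt (fun t => Phi (B t) - Phi (B 0) - ∑ j, x j * Real.exp (-(2 * x j)) *
      (‖B t (e j)‖ ^ 2 - ‖B 0 (e j)‖ ^ 2)) 0 0 := by
    rw [hasDerivAt_iff_isLittleO]
    have hz : (fun t => Phi (B t) - Phi (B 0) - ∑ j, x j * Real.exp (-(2 * x j)) *
      (‖B t (e j)‖ ^ 2 - ‖B 0 (e j)‖ ^ 2)) =O[𝓝 0] (fun t : ℝ => ‖t - 0‖ ^ 2) := by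
      refine Asymptotics.IsBigO.trans (g := fun t => C * ‖ContinuousLinearMap.adjoint (B t) * B t -
        ContinuousLinearMap.adjoint (B 0) * B 0‖ ^ 2) ?_ ?_
      · refine Asymptotics.IsBigO.of_bound 1 ?_
        have := hB.continuousAt.tendsto.eventually hC
        filter_upwards [this] with t ht
        rw [one_mul, Real.norm_eq_abs]
        exact ht.trans (le_abs_self _)
      · exact ((hM.norm_norm).pow 2).const_mul_left C
    have hs : (fun t : ℝ => ‖t - 0‖ ^ 2) =o[𝓝 0] (fun t : ℝ => t - 0) := by
      simpa using Asymptotics.isLittleO_norm_pow_id (E' := ℝ) (n := 2) one_lt_two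
    simpa using hz.trans_isLittleO hs
  have := (hr.add hl).add_const (Phi (B 0))
  simpa [Pi.add_def] using! this

end D
end Chev

namespace Chev
open scoped InnerProductSpace TensorProduct Topology
open Module

section D
variable {E : Type*} [NormedAddCommGroup E] [InnerProductSpace ℂ E] [FiniteDimensional ℂ E]
  [CompleteSpace E]

lemma diag_symmetric {ι : Type*} [Fintype ι] (e : OrthonormalBasis ι ℂ E) (x : ι → ℝ)
    (X : E →ₗ[ℂ] E) (hX : ∀ i, X (e i) = ((x i : ℝ) : ℂ) • e i) : X.IsSymmetric := by
  classical
  intro v w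
  have key : ∀ (i : ι) (w : E), ⟪e i, X w⟫_ℂ = (x i : ℂ) * ⟪e i, w⟫_ℂ := by
    intro i w
    have : X w = ∑ j, ⟪e j, w⟫_ℂ • ((x j : ℂ) • e j) := by
      conv_lhs => rw [← e.sum_repr' w]
      simp [hX]
    rw [this, inner_sum]
    simp only [inner_smul_right, e.inner_eq_ite]
    simp
    ring
  rw [← e.sum_inner_mul_inner, ← e.sum_inner_mul_inner v]
  refine Finset.sum_congr rfl fun i _ => ?_
  rw [key, ← inner_conj_symm, key, map_mul, inner_conj_symm, Complex.conj_ofReal]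
  ring

lemma balanced_of_min {κ : Type*} [Fintype κ] (S : κ → E →L[ℂ] E)
    (hS : ∀ a, Function.Injective (S a))
    (hmin : ∀ u : (E →L[ℂ] E)ˣ, ∑ a, Phi (S a) ≤ ∑ a, Phi (u.val * S a * (u⁻¹).val)) :
    Balanced (fun a => (S a).toLinearMap) := by
  classical
  choose e f x hsvd hP using fun a => Phi_spec (hS a)
  let X : κ → E →ₗ[ℂ] E := fun a => (e a).toBasis.constr ℂ (fun i => ((x a i : ℝ) : ℂ) • e a i)
  let Y : κ → E →ₗ[ℂ] E := fun a => (f a).toBasis.constr ℂ (fun i => ((x a i : ℝ) : ℂ) • f a i)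
  have hX : ∀ a i, X a (e a i) = ((x a i : ℝ) : ℂ) • e a i := fun a i => by
    have := (e a).toBasis.constr_basis ℂ (fun i => ((x a i : ℝ) : ℂ) • e a i) i
    simpa [X] using this
  have hY : ∀ a i, Y a (f a i) = ((x a i : ℝ) : ℂ) • f a i := fun a i => by
    have := (f a).toBasis.constr_basis ℂ (fun i => ((x a i : ℝ) : ℂ) • f a i) i
    simpa [Y] using this
  let Z : E →ₗ[ℂ] E := ∑ a, (Y a - X a)
  have hZ : Z.IsSymmetric := by
    have h1 : ∀ T : Finset κ, (∑ a ∈ T, (Y a - X a)).IsSymmetric := by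
      intro T
      induction T using Finset.induction_on with
      | empty => simp [LinearMap.IsSymmetric]
      | insert a T ha ih =>
        rw [Finset.sum_insert ha]
        exact ((diag_symmetric _ _ _ (hY a)).sub (diag_symmetric _ _ _ (hX a))).add ih
    exact h1 _
  let Zc : E →L[ℂ] E := LinearMap.toContinuousLinearMap Z
  have hZc : ∀ v, Zc v = Z v := fun v => rfl
  let B : κ → ℝ → E →L[ℂ] E := fun a t =>
    (1 + t • Zc) * S a * Ring.inverse (1 + t • Zc)
  have hB0 : ∀ a, B a 0 = S a := fun a => by simp [B]
  have hlin : HasDerivAt (fun t : ℝ => (1 + t • Zc : E →L[ℂ] E)) Zc 0 := by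
    have := ((hasDerivAt_id (0:ℝ)).smul_const Zc).const_add 1
    simpa using this
  have hinv : HasDerivAt (fun t : ℝ => Ring.inverse (1 + t • Zc : E →L[ℂ] E)) (-Zc) 0 := by
    have h1 := hasFDerivAt_ringInverse (𝕜 := ℝ) (1 : (E →L[ℂ] E)ˣ)
    have h2 := HasFDerivAt.comp_hasDerivAt_of_eq (0:ℝ) h1 hlin (by simp)
    simpa [Function.comp_def] using h2
  have hB : ∀ a, HasDerivAt (B a) (Zc * S a - S a * Zc) 0 := by
    intro a
    have := (hlin.mul_const (S a)).mul hinv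
    simpa [B, sub_eq_add_neg] using! this
  have hd : ∀ a, HasDerivAt (fun t => Phi (B a t))
      (2 * (LinearMap.trace ℂ E (Z * (Y a - X a))).re) 0 := by
    intro a
    have h1 := Phi_hasDerivAt (hB a) (by rw [hB0]; exact hsvd a) (by rw [hB0]; exact hP a)
    refine h1.congr_deriv ?_
    rw [mul_sub, map_sub, LinearMap.trace_eq_sum_inner _ (f a), LinearMap.trace_eq_sum_inner _ (e a),
      ← Finset.sum_sub_distrib, Complex.re_sum, Finset.mul_sum]
    refine Finset.sum_congr rfl fun j _ => ?_
    have hs : S a (e a j) = ((Real.exp (x a j) : ℝ) : ℂ) • f a j := hsvd a j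
    have hs2 : ⟪f a j, S a (Z (e a j))⟫_ℂ = _ := svd_inner (hsvd a) j (Z (e a j))
    have e1 : ⟪B a 0 (e a j), (Zc * S a - S a * Zc) (e a j)⟫_ℂ =
        (Real.exp (2 * x a j) : ℂ) * (⟪f a j, Z (f a j)⟫_ℂ - ⟪e a j, Z (e a j)⟫_ℂ) := by
      rw [hB0]
      have : (Zc * S a - S a * Zc) (e a j) = Z (S a (e a j)) - S a (Z (e a j)) := rfl
      rw [this, inner_sub_right, hs, map_smul, inner_smul_left, inner_smul_left, inner_smul_right,
        hs2, Complex.conj_ofReal, two_mul, Real.exp_add, Complex.ofReal_mul]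
      ring
    have e2 : ⟪f a j, (Z * Y a) (f a j)⟫_ℂ - ⟪e a j, (Z * X a) (e a j)⟫_ℂ =
        (x a j : ℂ) * (⟪f a j, Z (f a j)⟫_ℂ - ⟪e a j, Z (e a j)⟫_ℂ) := by
      rw [Module.End.mul_apply, Module.End.mul_apply, hX, hY, map_smul, map_smul,
        inner_smul_right, inner_smul_right]
      ring
    rw [e1, e2, Complex.re_ofReal_mul, Complex.re_ofReal_mul]
    have : Real.exp (-(2 * x a j)) * Real.exp (2 * x a j) = 1 := by
      rw [← Real.exp_add]; simp
    linear_combination (2 * x a j * (⟪f a j, Z (f a j)⟫_ℂ - ⟪e a j, Z (e a j)⟫_ℂ).re) * this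
  have hD : HasDerivAt (fun t => ∑ a, Phi (B a t))
      (∑ a, 2 * (LinearMap.trace ℂ E (Z * (Y a - X a))).re) 0 :=
    HasDerivAt.fun_sum fun a _ => hd a
  have hloc : IsLocalMin (fun t => ∑ a, Phi (B a t)) 0 := by
    have hu : ∀ᶠ t in 𝓝 (0:ℝ), IsUnit (1 + t • Zc : E →L[ℂ] E) := by
      have : Filter.Tendsto (fun t : ℝ => (1 + t • Zc : E →L[ℂ] E)) (𝓝 0) (𝓝 1) := by
        simpa using hlin.continuousAt.tendsto
      exact this.eventually (Units.isOpen.mem_nhds isUnit_one)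
    filter_upwards [hu] with t ht
    obtain ⟨u, hu⟩ := ht
    have := hmin u
    simp only [hB0]
    refine this.trans (le_of_eq ?_)
    refine Finset.sum_congr rfl fun a _ => ?_
    simp only [B, ← hu, Ring.inverse_unit]
  have h0 := hloc.hasDerivAt_eq_zero hD
  have htr : (LinearMap.trace ℂ E (Z * Z)).re = 0 := by
    have : Z * Z = ∑ a, Z * (Y a - X a) := by rw [← Finset.mul_sum]
    rw [this, map_sum, Complex.re_sum]
    rw [← Finset.mul_sum] at h0
    linarith
  have hZ0 : Z = 0 := by
    let b := stdOrthonormalBasis ℂ E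
    rw [LinearMap.trace_eq_sum_inner _ b, Complex.re_sum] at htr
    have e1 : ∀ i, (⟪b i, (Z * Z) (b i)⟫_ℂ).re = ‖Z (b i)‖ ^ 2 := by
      intro i
      rw [Module.End.mul_apply, ← hZ (b i) (Z (b i)), inner_self_eq_norm_sq_to_K]
      simp [← Complex.ofReal_pow]
    simp only [e1] at htr
    rw [Finset.sum_eq_zero_iff_of_nonneg (fun _ _ => by positivity)] at htr
    refine b.toBasis.ext fun i => ?_
    have := htr i (Finset.mem_univ _)
    simpa using this
  refine ⟨X, Y, fun a => ⟨_, inferInstance, e a, f a, x a, hsvd a, hX a, hY a⟩, ?_⟩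
  have : ∑ a, (Y a - X a) = 0 := hZ0
  rw [Finset.sum_sub_distrib, sub_eq_zero] at this
  exact this.symm

lemma exists_min [Nontrivial E] {κ : Type*} [Fintype κ] (s : κ → E →L[ℂ] E)
    (hs : ∀ a, Function.Injective (s a))
    (hirr : ∀ L : Submodule ℂ E, (∀ a, ∀ v ∈ L, s a v ∈ L) → L = ⊥ ∨ L = ⊤) :
    ∃ h : (E →L[ℂ] E)ˣ, ∀ u : (E →L[ℂ] E)ˣ,
      ∑ a, Phi (h.val * s a * (h⁻¹).val) ≤ ∑ a, Phi (u.val * s a * (u⁻¹).val) := by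
  classical
  have : ProperSpace (E →L[ℂ] E) := FiniteDimensional.proper ℂ _
  have uinj : ∀ u : (E →L[ℂ] E)ˣ, Function.Injective (u : E →L[ℂ] E) := by
    intro u v w hvw
    have := congrArg (u⁻¹ : (E →L[ℂ] E)ˣ).val hvw
    have h2 : ∀ v, (u⁻¹ : (E →L[ℂ] E)ˣ).val (u.val v) = v := fun v => by
      exact congrArg (fun T : E →L[ℂ] E => T v) u.inv_mul
    simpa only [h2] using this
  have cinj : ∀ (u : (E →L[ℂ] E)ˣ) a,
      Function.Injective (u.val * s a * (u⁻¹).val) := by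
    intro u a
    exact ((uinj u).comp (hs a)).comp (uinj u⁻¹)
  let f : (E →L[ℂ] E) → ℝ := fun h => ∑ a, Phi (h * s a * Ring.inverse h)
  have fu : ∀ u : (E →L[ℂ] E)ˣ, f u = ∑ a, Phi (u.val * s a * (u⁻¹).val) := by
    intro u; simp [f]
  have Phi_nonneg : ∀ B : E →L[ℂ] E, 0 ≤ Phi B := by
    intro B
    unfold Phi
    split_ifs
    · positivity
    · exact le_rfl
  let R := Real.exp (Real.sqrt (f 1))
  let K : Set (E →L[ℂ] E) := {h | ‖h‖ = 1 ∧ ∀ a v, ‖h (s a v)‖ ≤ R * ‖h v‖}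
  have Kclosed : IsClosed K := by
    have : K = {h | ‖h‖ = 1} ∩ ⋂ a, ⋂ v, {h : E →L[ℂ] E | ‖h (s a v)‖ ≤ R * ‖h v‖} := by
      ext h; simp [K]
    rw [this]
    refine (isClosed_eq continuous_norm continuous_const).inter ?_
    refine isClosed_iInter fun a => isClosed_iInter fun v => isClosed_le ?_ ?_ <;> fun_prop
  have Kcomp : IsCompact K := by
    refine (isCompact_sphere (0 : E →L[ℂ] E) 1).of_isClosed_subset Kclosed ?_
    intro h hh
    simpa using hh.1
  have Kunit : ∀ h ∈ K, IsUnit h := by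
    intro h hh
    have hk : LinearMap.ker h.toLinearMap = ⊥ := by
      rcases hirr (LinearMap.ker h.toLinearMap) (fun a v hv => by
        have h1 := hh.2 a v
        have h2 : h v = 0 := hv
        rw [h2] at h1
        have : h (s a v) = 0 := by simpa using h1
        exact this) with h1 | h1
      · exact h1
      · exfalso
        have : h = 0 := by
          ext v
          have : v ∈ LinearMap.ker h.toLinearMap := h1 ▸ Submodule.mem_top
          exact this
        have h2 := hh.1
        simp [this] at h2
    have hu : IsUnit h.toLinearMap := (LinearMap.isUnit_iff_ker_eq_bot _).2 hk
    obtain ⟨u, hu⟩ := hu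
    refine ⟨⟨h, LinearMap.toContinuousLinearMap (u⁻¹).val, ?_, ?_⟩, rfl⟩
    · ext v
      have := congrArg (fun T : E →ₗ[ℂ] E => T v) u.mul_inv
      rw [hu] at this
      exact this
    · ext v
      have := congrArg (fun T : E →ₗ[ℂ] E => T v) u.inv_mul
      rw [hu] at this
      exact this
  have fcont : ContinuousOn f K := by
    intro h hh
    refine ContinuousAt.continuousWithinAt ?_
    obtain ⟨u, rfl⟩ := Kunit h hh
    refine tendsto_finsetSum _ fun a _ => ?_
    have h1 : ContinuousAt (fun h : E →L[ℂ] E => h * s a * Ring.inverse h) (u : E →L[ℂ] E) :=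
      (continuousAt_id.mul continuousAt_const).mul (NormedRing.inverse_continuousAt u)
    have h2 : ContinuousAt Phi ((u : E →L[ℂ] E) * s a * Ring.inverse (u : E →L[ℂ] E)) := by
      refine Phi_continuousAt ?_
      rw [Ring.inverse_unit]
      exact cinj u a
    exact ContinuousAt.comp (f := fun h : E →L[ℂ] E => h * s a * Ring.inverse h) h2 h1
  have hred : ∀ u : (E →L[ℂ] E)ˣ, f u ≤ f 1 → ∃ h ∈ K, f h = f u := by
    intro u hu
    have hu0 : ‖(u : E →L[ℂ] E)‖ ≠ 0 := by
      rw [norm_ne_zero_iff]; exact u.ne_zero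
    let c : ℂ := ((‖(u : E →L[ℂ] E)‖⁻¹ : ℝ) : ℂ)
    have hc : c ≠ 0 := by simpa [c] using hu0
    refine ⟨c • (u : E →L[ℂ] E), ⟨?_, ?_⟩, ?_⟩
    · rw [norm_smul]; simp [c, hu0]
    · intro a v
      obtain ⟨b, d, y, hy, hP⟩ := Phi_spec (cinj u a)
      have h1 := svd_upper hy (u.val v)
      have h2 : (u.val * s a * (u⁻¹).val) (u.val v) = u.val (s a v) := by
        have := congrArg (fun T : E →L[ℂ] E => T v) u.inv_mul
        have h3 : (u⁻¹ : (E →L[ℂ] E)ˣ).val (u.val v) = v := this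
        change u.val (s a ((u⁻¹ : (E →L[ℂ] E)ˣ).val (u.val v))) = _
        rw [h3]
      have h3 : ‖u.val (s a v)‖ ≤ Real.exp (Real.sqrt (∑ i, y i ^ 2)) * ‖u.val v‖ := by
        rw [← h2]; exact h1
      have h4 : ∑ i, y i ^ 2 ≤ f 1 := by
        rw [← hP]
        refine le_trans ?_ hu
        rw [fu]
        exact Finset.single_le_sum (f := fun a => Phi (u.val * s a * (u⁻¹).val))
          (fun a _ => Phi_nonneg _) (Finset.mem_univ a)
      have h5 : ‖u.val (s a v)‖ ≤ R * ‖u.val v‖ := by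
        refine h3.trans ?_
        gcongr
        exact Real.exp_le_exp.2 (Real.sqrt_le_sqrt h4)
      simp only [ContinuousLinearMap.smul_apply, norm_smul]
      calc ‖c‖ * ‖u.val (s a v)‖ ≤ ‖c‖ * (R * ‖u.val v‖) := by gcongr
        _ = _ := by ring
    · have : Ring.inverse (c • (u : E →L[ℂ] E)) = c⁻¹ • ((u⁻¹ : (E →L[ℂ] E)ˣ) : E →L[ℂ] E) := by
        let w : (E →L[ℂ] E)ˣ := ⟨c • u, c⁻¹ • ((u⁻¹ : (E →L[ℂ] E)ˣ) : E →L[ℂ] E),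
          by simp [smul_smul, hc], by simp [smul_smul, hc]⟩
        exact Ring.inverse_unit w
      simp only [f, this, Ring.inverse_unit]
      refine Finset.sum_congr rfl fun a _ => ?_
      congr 1
      simp [smul_smul, hc]
  obtain ⟨h1, h1K, -⟩ := hred 1 (by simp)
  obtain ⟨h, hK, hm⟩ := Kcomp.exists_isMinOn ⟨h1, h1K⟩ fcont
  obtain ⟨w, rfl⟩ := Kunit h hK
  refine ⟨w, fun u => ?_⟩
  rw [← fu, ← fu]
  by_cases hu : f u ≤ f 1
  · obtain ⟨g, hg, he⟩ := hred u hu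
    rw [← he]
    exact hm hg
  · obtain ⟨g, hg, he⟩ := hred 1 (by simp)
    have : f w ≤ f g := hm hg
    rw [he] at this
    simp only [Units.val_one] at this
    linarith

lemma exists_balanced [Nontrivial E] {κ : Type*} [Fintype κ] (s : κ → E →ₗ[ℂ] E)
    (hs : ∀ a, Function.Injective (s a))
    (hirr : ∀ L : Submodule ℂ E, (∀ a, ∀ v ∈ L, s a v ∈ L) → L = ⊥ ∨ L = ⊤) :
    ∃ h : E ≃ₗ[ℂ] E, Balanced (fun a => h.toLinearMap ∘ₗ s a ∘ₗ h.symm.toLinearMap) := by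
  obtain ⟨u, hu⟩ := exists_min (fun a => LinearMap.toContinuousLinearMap (s a)) hs hirr
  have i1 : ∀ v, (u⁻¹ : (E →L[ℂ] E)ˣ).val (u.val v) = v := fun v =>
    congrArg (fun T : E →L[ℂ] E => T v) u.inv_mul
  have i2 : ∀ v, u.val ((u⁻¹ : (E →L[ℂ] E)ˣ).val v) = v := fun v =>
    congrArg (fun T : E →L[ℂ] E => T v) u.mul_inv
  let h : E ≃ₗ[ℂ] E :=
    { u.val.toLinearMap with
      invFun := fun v => (u⁻¹ : (E →L[ℂ] E)ˣ).val v
      left_inv := i1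
      right_inv := i2 }
  refine ⟨h, ?_⟩
  have := balanced_of_min (fun a => u.val * LinearMap.toContinuousLinearMap (s a) *
    (u⁻¹ : (E →L[ℂ] E)ˣ).val) (fun a => ?_) (fun w => ?_)
  · exact this
  · exact (h.injective.comp (hs a)).comp h.symm.injective
  · refine (hu (w * u)).trans (le_of_eq ?_)
    refine Finset.sum_congr rfl fun a _ => ?_
    simp [mul_assoc]

end D
end Chev

namespace Chev
open scoped InnerProductSpace TensorProduct Topology
open Module

section R

lemma span_finset {K M G : Type*} [Field K] [AddCommGroup M] [Module K M] [FiniteDimensional K M]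
    (f : G → M) : ∃ S : Finset G, ∀ g, f g ∈ Submodule.span K (f '' S) := by
  classical
  have h1 : (Submodule.span K (Set.range f)).FG := IsNoetherian.noetherian _
  obtain ⟨s, hs, hs2⟩ := (Submodule.fg_span_iff_fg_span_finset_subset _).1 h1
  obtain ⟨S, hS⟩ := Finset.subset_set_image_iff.1 (show (s : Set M) ⊆ f '' Set.univ by simpa using hs)
  refine ⟨S, fun g => ?_⟩
  have : f g ∈ Submodule.span K (Set.range f) := Submodule.subset_span ⟨g, rfl⟩
  rw [hs2, ← hS.2] at this
  simpa using this

/-- if `L` is stable under a set of operators, it is stable under the span -/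
lemma stable_span {K V : Type*} [Field K] [AddCommGroup V] [Module K V] {T : Set (End K V)}
    {L : Submodule K V} (hL : ∀ t ∈ T, ∀ v ∈ L, t v ∈ L) {a : End K V}
    (ha : a ∈ Submodule.span K T) : ∀ v ∈ L, a v ∈ L := by
  induction ha using Submodule.span_induction with
  | mem x h => exact hL x h
  | zero => simp
  | add x y _ _ hx hy => intro v hv; exact L.add_mem (hx v hv) (hy v hv)
  | smul c x _ hx => intro v hv; exact L.smul_mem _ (hx v hv)

lemma semisimple_iff {K G V : Type*} [Field K] [Group G] [AddCommGroup V] [Module K V]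
    (ρ : Representation K G V) :
    IsSemisimpleModule (MonoidAlgebra K G) ρ.asModule ↔
      ∀ L : Submodule K V, (∀ g, ∀ v ∈ L, ρ g v ∈ L) →
        ∃ L' : Submodule K V, (∀ g, ∀ v ∈ L', ρ g v ∈ L') ∧ IsCompl L L' := by
  rw [← Representation.isSemisimpleRepresentation_iff_isSemisimpleModule_asModule]
  constructor
  · intro h L hL
    obtain ⟨σ, hσ⟩ := h.exists_isCompl (⟨L, fun g v hv => hL g v hv⟩ : Subrepresentation ρ)
    refine ⟨σ.toSubmodule, fun g v hv => σ.apply_mem_toSubmodule g hv, ?_⟩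
    rw [isCompl_iff, disjoint_iff, codisjoint_iff] at hσ ⊢
    exact ⟨congrArg Subrepresentation.toSubmodule hσ.1, congrArg Subrepresentation.toSubmodule hσ.2⟩
  · intro h
    refine ⟨fun τ => ?_⟩
    obtain ⟨L', h1, h2⟩ := h τ.toSubmodule fun g v hv => τ.apply_mem_toSubmodule g hv
    refine ⟨⟨L', fun g v hv => h1 g v hv⟩, ?_⟩
    rw [isCompl_iff, disjoint_iff, codisjoint_iff] at h2 ⊢
    exact ⟨Subrepresentation.toSubmodule_injective h2.1,
      Subrepresentation.toSubmodule_injective h2.2⟩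

def Irr {K G V : Type*} [Field K] [Group G] [AddCommGroup V] [Module K V]
    (ρ : Representation K G V) : Prop :=
  Nontrivial V ∧ ∀ L : Submodule K V, (∀ g, ∀ v ∈ L, ρ g v ∈ L) → L = ⊥ ∨ L = ⊤

lemma rho_injective {K G V : Type*} [Field K] [Group G] [AddCommGroup V] [Module K V]
    (ρ : Representation K G V) (g : G) : Function.Injective (ρ g) := by
  intro v w h
  have := congrArg (ρ g⁻¹) h
  simpa using this

/-- balanced metric for an irreducible representation -/
lemma irr_balanced {G V : Type*} [Group G] [AddCommGroup V] [Module ℂ V] [FiniteDimensional ℂ V]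
    (ρ : Representation ℂ G V) (h : Irr ρ) (S : Finset G)
    (hS : ∀ g, ρ g ∈ Submodule.span ℂ (ρ '' S)) :
    ∃ Φ : V ≃ₗ[ℂ] EuclideanSpace ℂ (Fin (finrank ℂ V)),
      Balanced (fun a : S => Φ.toLinearMap ∘ₗ ρ a ∘ₗ Φ.symm.toLinearMap) := by
  let φ : V ≃ₗ[ℂ] EuclideanSpace ℂ (Fin (finrank ℂ V)) :=
    LinearEquiv.ofFinrankEq _ _ (by simp)
  have := h.1
  have : Nontrivial (EuclideanSpace ℂ (Fin (finrank ℂ V))) := φ.symm.toEquiv.nontrivial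
  obtain ⟨u, hu⟩ := exists_balanced (fun a : S => φ.toLinearMap ∘ₗ ρ a ∘ₗ φ.symm.toLinearMap)
    (fun a => (φ.injective.comp (rho_injective ρ a)).comp φ.symm.injective) (fun L hL => by
      have h1 := h.2 (L.comap φ.toLinearMap) (fun g => by
        refine stable_span (T := ρ '' S) ?_ (hS g)
        rintro _ ⟨a, ha, rfl⟩ v hv
        have := hL ⟨a, ha⟩ (φ v) hv
        simpa using this)
      have h2 : (L.comap φ.toLinearMap).map φ.toLinearMap = L :=
        Submodule.map_comap_eq_of_surjective φ.surjective L
      rcases h1 with h1 | h1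
      · left; rw [← h2, h1, Submodule.map_bot]
      · right; rw [← h2, h1, Submodule.map_top]; exact LinearMap.range_eq_top.2 φ.surjective)
  exact ⟨φ.trans u, hu⟩

lemma simple_case {G V W : Type*} [Group G] [AddCommGroup V] [Module ℂ V] [FiniteDimensional ℂ V]
    [AddCommGroup W] [Module ℂ W] [FiniteDimensional ℂ W]
    (ρV : Representation ℂ G V) (ρW : Representation ℂ G W) (hV : Irr ρV) (hW : Irr ρW) :
    IsSemisimpleModule (MonoidAlgebra ℂ G) (ρV.tprod ρW).asModule := by
  classical
  obtain ⟨S, hS⟩ := span_finset (K := ℂ)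
    (fun g => (ρV g, ρW g, (ρV.tprod ρW) g) : G → End ℂ V × End ℂ W × End ℂ (V ⊗[ℂ] W))
  have hSV : ∀ g, ρV g ∈ Submodule.span ℂ (ρV '' S) := fun g => by
    have := Submodule.mem_map_of_mem (f := LinearMap.fst ℂ _ _) (hS g)
    rw [Submodule.map_span, Set.image_image] at this
    exact this
  have hSW : ∀ g, ρW g ∈ Submodule.span ℂ (ρW '' S) := fun g => by
    have := Submodule.mem_map_of_mem (f := LinearMap.fst ℂ _ _ ∘ₗ LinearMap.snd ℂ _ _) (hS g)
    rw [Submodule.map_span, Set.image_image] at this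
    exact this
  have hST : ∀ g, (ρV.tprod ρW) g ∈ Submodule.span ℂ ((ρV.tprod ρW) '' S) := fun g => by
    have := Submodule.mem_map_of_mem (f := LinearMap.snd ℂ _ _ ∘ₗ LinearMap.snd ℂ _ _) (hS g)
    rw [Submodule.map_span, Set.image_image] at this
    exact this
  obtain ⟨Φ, hΦ⟩ := irr_balanced ρV hV S hSV
  obtain ⟨Ψ, hΨ⟩ := irr_balanced ρW hW S hSW
  have hb := hΦ.tensor hΨ
  let Θ := TensorProduct.congr Φ Ψ
  have hΘ : ∀ (a : G) x, TensorProduct.map (Φ.toLinearMap ∘ₗ ρV a ∘ₗ Φ.symm.toLinearMap)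
      (Ψ.toLinearMap ∘ₗ ρW a ∘ₗ Ψ.symm.toLinearMap) (Θ x) = Θ ((ρV.tprod ρW) a x) := by
    intro a x
    induction x using TensorProduct.induction_on with
    | zero => simp
    | tmul v w => simp [Θ]
    | add x y hx hy => simp only [map_add, hx, hy]
  rw [semisimple_iff]
  intro L hL
  have hperp := hb.orthogonal (fun a => ?_) (L.map Θ.toLinearMap) (fun a v hv => ?_)
  · refine ⟨((L.map Θ.toLinearMap)ᗮ).comap Θ.toLinearMap, fun g => ?_, ?_⟩
    · refine stable_span (T := (ρV.tprod ρW) '' S) ?_ (hST g)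
      rintro _ ⟨a, ha, rfl⟩ v hv
      have := hperp ⟨a, ha⟩ (Θ v) hv
      simp only [hΘ] at this
      exact this
    · have h1 : IsCompl (L.map Θ.toLinearMap) (L.map Θ.toLinearMap)ᗮ :=
        Submodule.isCompl_orthogonal _
      have h2 := h1.map (Submodule.orderIsoMapComap Θ).symm
      have h3 : (L.map Θ.toLinearMap).comap Θ.toLinearMap = L :=
        Submodule.comap_map_eq_of_injective Θ.injective L
      change IsCompl ((L.map Θ.toLinearMap).comap Θ.toLinearMap)
        (((L.map Θ.toLinearMap)ᗮ).comap Θ.toLinearMap) at h2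
      rwa [h3] at h2
  · have : (fun x => TensorProduct.map (Φ.toLinearMap ∘ₗ ρV a ∘ₗ Φ.symm.toLinearMap)
      (Ψ.toLinearMap ∘ₗ ρW a ∘ₗ Ψ.symm.toLinearMap) x) = Θ ∘ (ρV.tprod ρW) a ∘ Θ.symm := by
      funext x
      rw [← Θ.apply_symm_apply x, hΘ]; simp
    change Function.Injective (fun x => TensorProduct.map
      (Φ.toLinearMap ∘ₗ ρV a ∘ₗ Φ.symm.toLinearMap)
      (Ψ.toLinearMap ∘ₗ ρW a ∘ₗ Ψ.symm.toLinearMap) x)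
    rw [this]
    exact Θ.injective.comp ((rho_injective _ _).comp Θ.symm.injective)
  · obtain ⟨x, hx, rfl⟩ := hv
    refine ⟨(ρV.tprod ρW) a x, hL _ _ hx, ?_⟩
    exact (hΘ a x).symm

lemma irr_of_simple {K G V : Type*} [Field K] [Group G] [AddCommGroup V] [Module K V]
    (ρ : Representation K G V) (P : Submodule (MonoidAlgebra K G) ρ.asModule)
    (hP : IsSimpleModule (MonoidAlgebra K G) P) :
    Irr (Subrepresentation.ofSubmodule' P).toRepresentation := by
  refine ⟨IsSimpleModule.nontrivial (MonoidAlgebra K G) P, fun L hL => ?_⟩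
  have hat : IsAtom P := isSimpleModule_iff_isAtom.1 hP
  let τ : Subrepresentation ρ := ⟨L.map (Submodule.subtype _), by
    rintro g _ ⟨x, hx, rfl⟩
    exact ⟨_, hL g x hx, rfl⟩⟩
  have hle : τ.asSubmodule ≤ P := by
    rintro _ ⟨x, hx, rfl⟩
    exact x.2
  rcases hat.le_iff.1 hle with h | h
  · left
    rw [eq_bot_iff]
    intro x hx
    have h1 : (x : V) ∈ τ.asSubmodule := ⟨x, hx, rfl⟩
    rw [h] at h1
    have : (x : V) = 0 := h1
    simpa using this
  · right
    rw [eq_top_iff]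
    intro x _
    have h1 : (x : V) ∈ τ.asSubmodule := by rw [h]; exact x.2
    obtain ⟨y, hy, hxy⟩ := h1
    have : y = x := Subtype.ext hxy
    exact this ▸ hy

lemma iSup_simples {K G V : Type*} [Field K] [Group G] [AddCommGroup V] [Module K V]
    (ρ : Representation K G V) (h : IsSemisimpleModule (MonoidAlgebra K G) ρ.asModule) :
    ⨆ P : {P : Submodule (MonoidAlgebra K G) ρ.asModule // IsSimpleModule (MonoidAlgebra K G) P},
      (Subrepresentation.ofSubmodule' P.1).toSubmodule = ⊤ := by
  set T := ⨆ P : {P : Submodule (MonoidAlgebra K G) ρ.asModule //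
    IsSimpleModule (MonoidAlgebra K G) P}, (Subrepresentation.ofSubmodule' P.1).toSubmodule with hT
  let τ : Subrepresentation ρ := ⟨T, by
    intro g v hv
    rw [hT] at hv
    induction hv using Submodule.iSup_induction' with
    | mem P v hv =>
      exact Submodule.mem_iSup_of_mem P (Subrepresentation.apply_mem_toSubmodule _ g hv)
    | zero => rw [map_zero]; exact T.zero_mem
    | add x y _ _ hx hy => rw [map_add]; exact T.add_mem hx hy⟩
  have h1 : τ.asSubmodule = ⊤ := by
    rw [eq_top_iff, ← IsSemisimpleModule.sSup_simples_eq_top (MonoidAlgebra K G) ρ.asModule]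
    refine sSup_le fun P hP v hv => ?_
    exact Submodule.mem_iSup_of_mem (p := fun P : {P : Submodule (MonoidAlgebra K G) ρ.asModule //
      IsSimpleModule (MonoidAlgebra K G) P} => (Subrepresentation.ofSubmodule' P.1).toSubmodule)
      ⟨P, hP⟩ hv
  rw [eq_top_iff]
  intro v _
  have : ∀ x : ρ.asModule, x ∈ τ.asSubmodule := fun x => by rw [h1]; exact Submodule.mem_top
  exact this v

theorem complex_case {G V W : Type*} [Group G] [AddCommGroup V] [Module ℂ V]
    [FiniteDimensional ℂ V]
    [AddCommGroup W] [Module ℂ W] [FiniteDimensional ℂ W]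
    (ρV : Representation ℂ G V) (ρW : Representation ℂ G W)
    (hV : IsSemisimpleModule (MonoidAlgebra ℂ G) ρV.asModule)
    (hW : IsSemisimpleModule (MonoidAlgebra ℂ G) ρW.asModule) :
    IsSemisimpleModule (MonoidAlgebra ℂ G) (ρV.tprod ρW).asModule := by
  let I := {P : Submodule (MonoidAlgebra ℂ G) ρV.asModule // IsSimpleModule (MonoidAlgebra ℂ G) P}
  let J := {P : Submodule (MonoidAlgebra ℂ G) ρW.asModule // IsSimpleModule (MonoidAlgebra ℂ G) P}
  let sV : I → Subrepresentation ρV := fun P => Subrepresentation.ofSubmodule' P.1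
  let sW : J → Subrepresentation ρW := fun P => Subrepresentation.ofSubmodule' P.1
  let F : ∀ p : I × J, Representation.IntertwiningMap
      ((sV p.1).toRepresentation.tprod (sW p.2).toRepresentation) (ρV.tprod ρW) := fun p =>
    ⟨TensorProduct.map (Submodule.subtype _) (Submodule.subtype _), fun g => by
      ext v w
      rfl⟩
  refine isSemisimpleModule_of_isSemisimpleModule_submodule'
    (p := fun p : I × J => LinearMap.range (Representation.IntertwiningMap.equivLinearMapAsModule
      _ _ (F p))) (fun p => ?_) ?_
  · have := simple_case _ _ (irr_of_simple ρV p.1.1 p.1.2) (irr_of_simple ρW p.2.1 p.2.2)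
    exact IsSemisimpleModule.range (R := MonoidAlgebra ℂ G)
      (M := ((sV p.1).toRepresentation.tprod (sW p.2).toRepresentation).asModule)
      (N := (ρV.tprod ρW).asModule)
      (Representation.IntertwiningMap.equivLinearMapAsModule _ _ (F p))
  · set N := ⨆ p : I × J, LinearMap.range (Representation.IntertwiningMap.equivLinearMapAsModule
      _ _ (F p)) with hN
    have key : ∀ (P : I) (Q : J) (v : V) (w : W), v ∈ (sV P).toSubmodule → w ∈ (sW Q).toSubmodule →
        (show (ρV.tprod ρW).asModule from v ⊗ₜ[ℂ] w) ∈ N := by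
      intro P Q v w hv hw
      refine Submodule.mem_iSup_of_mem (P, Q) ?_
      exact ⟨(⟨v, hv⟩ : (sV P).toSubmodule) ⊗ₜ[ℂ] (⟨w, hw⟩ : (sW Q).toSubmodule), rfl⟩
    let N' := (Subrepresentation.ofSubmodule' N).toSubmodule
    have hV' : ⨆ P : I, (sV P).toSubmodule = ⊤ := iSup_simples ρV hV
    have hW' : ⨆ P : J, (sW P).toSubmodule = ⊤ := iSup_simples ρW hW
    have key2 : ∀ (v : V) (w : W), v ⊗ₜ[ℂ] w ∈ N' := by
      intro v w
      have hv : v ∈ ⨆ P : I, (sV P).toSubmodule := hV' ▸ Submodule.mem_top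
      induction hv using Submodule.iSup_induction' with
      | mem P v hv =>
        have hw : w ∈ ⨆ P : J, (sW P).toSubmodule := hW' ▸ Submodule.mem_top
        induction hw using Submodule.iSup_induction' with
        | mem Q w hw => exact key P Q v w hv hw
        | zero => rw [TensorProduct.tmul_zero]; exact N'.zero_mem
        | add x y _ _ hx hy => rw [TensorProduct.tmul_add]; exact N'.add_mem hx hy
      | zero => rw [TensorProduct.zero_tmul]; exact N'.zero_mem
      | add x y _ _ hx hy => rw [TensorProduct.add_tmul]; exact N'.add_mem hx hy
    rw [eq_top_iff]
    intro x _
    have : ∀ x : V ⊗[ℂ] W, x ∈ N' := by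
      intro x
      induction x using TensorProduct.induction_on with
      | zero => exact N'.zero_mem
      | tmul v w => exact key2 v w
      | add x y hx hy => exact N'.add_mem hx hy
    exact this x

end R
end Chev

namespace Chev
open scoped TensorProduct
open Module

section A
variable {K V : Type*} [Field K] [CharZero K] [AddCommGroup V] [Module K V] [FiniteDimensional K V]

/-- nondegeneracy of the trace form -/
def TrCrit (T : Submodule K (End K V)) : Prop :=
  ∀ a ∈ T, (∀ b ∈ T, LinearMap.trace K V (a * b) = 0) → a = 0

lemma trace_idem {e : End K V} (he : IsIdempotentElem e) (h : LinearMap.trace K V e = 0) : e = 0 := by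
  have h1 := (LinearMap.isProj_range_iff_isIdempotentElem e).2 he
  rw [h1.trace] at h
  have h2 : finrank K (LinearMap.range e) = 0 := by exact_mod_cast h
  rw [Submodule.finrank_eq_zero] at h2
  exact LinearMap.range_eq_bot.1 h2

lemma crit_iff_subalgebra (A : Subalgebra K (End K V)) :
    IsSemisimpleModule A V ↔ TrCrit (Subalgebra.toSubmodule A) := by
  have : IsArtinianRing A := IsArtinianRing.of_finite K A
  constructor
  · intro hss a ha hab
    have hJ : Ring.jacobson A = ⊥ := by
      rw [eq_bot_iff]
      intro x hx
      have := IsSemisimpleModule.jacobson_le_annihilator A V hx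
      rw [Module.mem_annihilator] at this
      have h2 : x = 0 := by
        apply Subtype.ext
        ext v
        exact this v
      simp [h2]
    have : IsSemisimpleRing A := IsArtinianRing.isSemisimpleRing_iff_jacobson.2 hJ
    let N : Ideal A :=
      { carrier := {x | ∀ b ∈ A, LinearMap.trace K V (x.1 * b) = 0}
        add_mem' := fun {x y} hx hy b hb => by
          change LinearMap.trace K V ((x.1 + y.1) * b) = 0
          rw [add_mul, map_add, hx b hb, hy b hb, add_zero]
        zero_mem' := fun b hb => by simp
        smul_mem' := fun c x hx b hb => by
          change LinearMap.trace K V (c.1 * x.1 * b) = 0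
          rw [mul_assoc, LinearMap.trace_mul_comm, mul_assoc]
          exact hx _ (A.mul_mem hb c.2) }
    obtain ⟨e, he, hN⟩ := IsSemisimpleRing.ideal_eq_span_idempotent N
    have heN : e ∈ N := hN ▸ Ideal.subset_span rfl
    have he0 : e.1 = 0 := by
      refine trace_idem ?_ ?_
      · exact congrArg Subtype.val he
      · simpa using heN 1 A.one_mem
    have he0' : e = 0 := Subtype.ext he0
    have haN : (⟨a, ha⟩ : A) ∈ N := hab
    rw [hN, he0'] at haN
    simp at haN
    exact congrArg Subtype.val haN
  · intro hcrit
    have hJ : Ring.jacobson A = ⊥ := by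
      rw [eq_bot_iff]
      intro x hx
      obtain ⟨n, hn⟩ := IsArtinianRing.isNilpotent_jacobson_bot (R := A)
      have hnil : ∀ y ∈ Ring.jacobson A, IsNilpotent y := by
        intro y hy
        refine ⟨n, ?_⟩
        have : y ^ n ∈ (Ideal.jacobson (⊥ : Ideal A)) ^ n :=
          Ideal.pow_mem_pow (by rwa [Ideal.jacobson_bot]) n
        rw [hn] at this
        simpa using this
      have : x.1 = 0 := hcrit x.1 x.2 fun b hb => by
        rw [LinearMap.trace_mul_comm]
        obtain ⟨m, hm⟩ := hnil ((⟨b, hb⟩ : A) * x) (Ideal.mul_mem_left _ _ hx)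
        have h3 : IsNilpotent (b * x.1) := ⟨m, congrArg Subtype.val hm⟩
        exact (LinearMap.isNilpotent_trace_of_isNilpotent h3).eq_zero
      have h4 : x = 0 := Subtype.ext this
      simp [h4]
    have : IsSemisimpleRing A := IsArtinianRing.isSemisimpleRing_iff_jacobson.2 hJ
    infer_instance

lemma crit_iff {G : Type*} [Group G] (ρ : Representation K G V) :
    IsSemisimpleModule (MonoidAlgebra K G) ρ.asModule ↔
      TrCrit (Submodule.span K (Set.range ρ)) := by
  have h1 : Subalgebra.toSubmodule ρ.asAlgebraHom.range = Submodule.span K (Set.range ρ) := by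
    apply le_antisymm
    · rintro _ ⟨x, rfl⟩
      induction x using MonoidAlgebra.induction_linear with
      | zero => simp
      | add x y hx hy => 
        have := Submodule.add_mem _ hx hy
        simpa using this
      | single g a =>
        have : a • ρ g ∈ Submodule.span K (Set.range ρ) :=
          Submodule.smul_mem _ _ (Submodule.subset_span ⟨g, rfl⟩)
        simpa using! this
    · rw [Submodule.span_le]
      rintro _ ⟨g, rfl⟩
      exact ⟨MonoidAlgebra.of K G g, by simp⟩
  rw [← h1, ← crit_iff_subalgebra]
  let σ : MonoidAlgebra K G →+* ρ.asAlgebraHom.range := ρ.asAlgebraHom.rangeRestrict.toRingHom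
  have : RingHomSurjective σ := ⟨ρ.asAlgebraHom.rangeRestrict_surjective⟩
  let l : ρ.asModule →ₛₗ[σ] V :=
    { toFun := ρ.asModuleEquiv
      map_add' := map_add _
      map_smul' := fun r x => ρ.asModuleEquiv_map_smul r x }
  exact l.isSemisimpleModule_iff_of_bijective ρ.asModuleEquiv.bijective

end A
end Chev

namespace Chev
open scoped TensorProduct Kronecker
open Module

section LS

/-- every solution of the system `p` is a solution of the system `q` -/
def LinSys {K Γ α β : Type*} [Field K] (p : α → Γ → K) (q : β → Γ → K) : Prop :=
  ∀ c : Γ →₀ K, (∀ a, c.sum (fun h x => x * p a h) = 0) → ∀ b, c.sum (fun h x => x * q b h) = 0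

lemma linSys_map {k₀ K Γ α β : Type*} [Field k₀] [Field K] (φ : k₀ →+* K)
    (p : α → Γ → k₀) (q : β → Γ → k₀) :
    LinSys p q ↔ LinSys (fun a h => φ (p a h)) (fun b h => φ (q b h)) := by
  constructor
  · intro H c hc b
    let := φ.toAlgebra
    let e := Basis.ofVectorSpace k₀ K
    have key : ∀ i (r : Γ → k₀), (c.mapRange (e.coord i) (map_zero _)).sum (fun h x => x * r h)
        = e.coord i (c.sum (fun h x => x * φ (r h))) := by
      intro i r
      rw [Finsupp.sum_mapRange_index (by simp), map_finsuppSum]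
      refine Finsupp.sum_congr fun h _ => ?_
      have : c h * φ (r h) = r h • c h := by
        rw [Algebra.smul_def, mul_comm]; rfl
      rw [this, map_smul, smul_eq_mul, mul_comm]
    refine e.ext_elem fun i => ?_
    have h1 := H (c.mapRange (e.coord i) (map_zero _)) (fun a => by rw [key, hc]; simp) b
    rw [key] at h1
    simpa using h1
  · intro H c hc b
    have key : ∀ (r : Γ → k₀), (c.mapRange φ (map_zero _)).sum (fun h x => x * φ (r h))
        = φ (c.sum (fun h x => x * r h)) := by
      intro r
      rw [Finsupp.sum_mapRange_index (by simp), map_finsuppSum]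
      simp
    have h1 := H (c.mapRange φ (map_zero _)) (fun a => by rw [key, hc]; simp) b
    rw [key] at h1
    exact φ.injective (by simpa using h1)

def MCrit {K Γ n : Type*} [Field K] [Fintype n] (T : Γ → Matrix n n K) : Prop :=
  LinSys (fun g h => (T h * T g).trace) (fun (ij : n × n) h => T h ij.1 ij.2)

lemma mCrit_map {k₀ K Γ n : Type*} [Field k₀] [Field K] [Fintype n] (φ : k₀ →+* K)
    (T : Γ → Matrix n n k₀) : MCrit T ↔ MCrit (fun g => (T g).map φ) := by
  unfold MCrit
  rw [linSys_map φ]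
  have : ∀ g h, φ (T h * T g).trace = ((T h).map φ * (T g).map φ).trace := by
    intro g h
    simp [Matrix.trace, Matrix.mul_apply]
  simp_rw [this]
  rfl

lemma trCrit_iff_mCrit {K Γ V n : Type*} [Field K] [Fintype n] [DecidableEq n]
    [AddCommGroup V] [Module K V] (b : Basis n K V) (f : Γ → End K V) :
    TrCrit (Submodule.span K (Set.range f)) ↔ MCrit (fun g => LinearMap.toMatrix b b (f g)) := by
  have htr : ∀ (c : Γ →₀ K) g, LinearMap.trace K V ((c.sum fun h x => x • f h) * f g) =
      c.sum fun h x => x * (LinearMap.toMatrix b b (f h) * LinearMap.toMatrix b b (f g)).trace := by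
    intro c g
    rw [Finsupp.sum, Finset.sum_mul, map_sum]
    refine Finset.sum_congr rfl fun h _ => ?_
    rw [smul_mul_assoc, map_smul, LinearMap.trace_eq_matrix_trace K b, LinearMap.toMatrix_mul,
      smul_eq_mul]
  have hz : ∀ (c : Γ →₀ K), (c.sum fun h x => x • f h) = 0 ↔
      ∀ ij : n × n, (c.sum fun h x => x * LinearMap.toMatrix b b (f h) ij.1 ij.2) = 0 := by
    intro c
    rw [← (LinearMap.toMatrix b b).map_eq_zero_iff, ← Matrix.ext_iff]
    simp only [Prod.forall, Finsupp.sum, map_sum, map_smul, Matrix.sum_apply, Matrix.smul_apply,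
      smul_eq_mul, Matrix.zero_apply]
  constructor
  · intro H c hc
    rw [← hz]
    refine H _ (Finsupp.mem_span_range_iff_exists_finsupp.2 ⟨c, rfl⟩) fun x hx => ?_
    induction hx using Submodule.span_induction with
    | mem x h => obtain ⟨g, rfl⟩ := h; rw [htr]; exact hc g
    | zero => simp
    | add x y _ _ hx hy => rw [mul_add, map_add, hx, hy, add_zero]
    | smul a x _ hx => rw [mul_smul_comm, map_smul, hx, smul_zero]
  · intro H a ha hab
    obtain ⟨c, rfl⟩ := Finsupp.mem_span_range_iff_exists_finsupp.1 ha
    rw [hz]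
    refine H c fun g => ?_
    rw [← htr]
    exact hab _ (Submodule.subset_span ⟨g, rfl⟩)

lemma semisimple_iff_mCrit {K Γ V n : Type*} [Field K] [CharZero K] [Group Γ] [Fintype n]
    [DecidableEq n] [AddCommGroup V] [Module K V] [FiniteDimensional K V] (b : Basis n K V)
    (ρ : Representation K Γ V) : IsSemisimpleModule (MonoidAlgebra K Γ) ρ.asModule ↔
      MCrit (fun g => LinearMap.toMatrix b b (ρ g)) := by
  rw [crit_iff, trCrit_iff_mCrit b]

end LS

section Emb
open Cardinal

lemma exists_embedding {F : Type*} [Field F] [CharZero F] (hF : #F ≤ ℵ₀) :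
    Nonempty (F →+* ℂ) := by
  let R := MvPolynomial ℝ F
  let Q := FractionRing R
  let L := AlgebraicClosure Q
  have hR : #R = Cardinal.lift #ℝ := by
    rw [MvPolynomial.cardinalMk_eq_max_lift]
    have h1 : Cardinal.lift.{0} #F ≤ ℵ₀ := by simpa using hF
    have h2 : ℵ₀ ≤ Cardinal.lift #ℝ := by
      rw [Cardinal.mk_real]; simpa using Cardinal.aleph0_le_continuum
    rw [sup_eq_right.2 (h1.trans h2), sup_eq_left.2 h2]
  have hQ : #Q = Cardinal.lift #ℝ := by rw [← hR]; exact FractionRing.cardinalMk R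
  have hL : #L = Cardinal.lift #ℝ := by
    apply le_antisymm
    · refine (Algebra.IsAlgebraic.cardinalMk_le_max Q L).trans ?_
      rw [hQ]
      simp [Cardinal.mk_real, Cardinal.aleph0_le_continuum]
    · rw [← hQ]
      exact Cardinal.mk_le_of_injective (algebraMap Q L).injective
  have hcQ : CharZero Q := charZero_of_injective_algebraMap
    ((IsFractionRing.injective R Q).comp (MvPolynomial.C_injective ℝ F) :
      Function.Injective (((algebraMap R Q).comp MvPolynomial.C).toAlgebra.algebraMap))
  have hcL : CharZero L := charZero_of_injective_algebraMap (algebraMap Q L).injective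
  have he : Nonempty (L ≃ ℂ) := by
    rw [← Cardinal.lift_mk_eq', hL]
    simp [Cardinal.mk_real, Cardinal.mk_complex]
  obtain ⟨E⟩ := IsAlgClosed.ringEquiv_of_equiv_of_charZero (K := L) (L := ℂ) (by
    rw [hL]; simp [Cardinal.mk_real, Cardinal.aleph0_lt_continuum]) he
  exact ⟨E.toRingHom.comp ((algebraMap Q L).comp ((algebraMap R Q).comp MvPolynomial.C))⟩

end Emb
end Chev

namespace Chev
open scoped TensorProduct Kronecker
open Module

section Fin

lemma complex_mat {Γ n m : Type*} [Group Γ] [Fintype n] [DecidableEq n] [Fintype m] [DecidableEq m]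
    (M : Γ →* Matrix n n ℂ) (N : Γ →* Matrix m m ℂ)
    (hM : MCrit (fun g => M g)) (hN : MCrit (fun g => N g)) :
    MCrit (fun g => M g ⊗ₖ N g) := by
  let bn := Pi.basisFun ℂ n
  let bm := Pi.basisFun ℂ m
  let ρ : Representation ℂ Γ (n → ℂ) := (Matrix.toLinAlgEquiv bn : _ →* _).comp M
  let σ : Representation ℂ Γ (m → ℂ) := (Matrix.toLinAlgEquiv bm : _ →* _).comp N
  have e1 : ∀ g, LinearMap.toMatrix bn bn (ρ g) = M g := fun g =>
    LinearMap.toMatrix_toLin bn bn (M g)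
  have e2 : ∀ g, LinearMap.toMatrix bm bm (σ g) = N g := fun g =>
    LinearMap.toMatrix_toLin bm bm (N g)
  have h1 := complex_case ρ σ ((semisimple_iff_mCrit bn ρ).2 (by simpa only [e1] using hM))
    ((semisimple_iff_mCrit bm σ).2 (by simpa only [e2] using hN))
  rw [semisimple_iff_mCrit (bn.tensorProduct bm)] at h1
  have e3 : ∀ g, LinearMap.toMatrix (bn.tensorProduct bm) (bn.tensorProduct bm) ((ρ.tprod σ) g)
      = M g ⊗ₖ N g := fun g => by
    rw [Representation.tprod_apply, TensorProduct.toMatrix_map, e1, e2]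
  simpa only [e3] using h1

lemma lift_mat {Γ n K : Type*} [Group Γ] [Fintype n] [DecidableEq n] [Field K] (F : Subfield K)
    (M : Γ →* Matrix n n K) (h : ∀ g i j, M g i j ∈ F) :
    ∃ M₀ : Γ →* Matrix n n F, ∀ g, (M₀ g).map F.subtype = M g := by
  have inj : Function.Injective (fun A : Matrix n n F => A.map F.subtype) := by
    intro A B hAB
    ext i j
    exact congrFun (congrFun hAB i) j
  refine ⟨{ toFun := fun g => Matrix.of fun i j => ⟨M g i j, h g i j⟩
            map_one' := ?_
            map_mul' := ?_ }, fun g => ?_⟩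
  · ext i j
    simp [Matrix.one_apply]
    split_ifs <;> simp
  · intro x y
    ext i j
    simp [Matrix.mul_apply]
  · ext i j; rfl

lemma mat_case {Γ n m K : Type*} [Group Γ] [Countable Γ] [Field K] [CharZero K]
    [Fintype n] [DecidableEq n] [Fintype m] [DecidableEq m]
    (M : Γ →* Matrix n n K) (N : Γ →* Matrix m m K)
    (hM : MCrit (fun g => M g)) (hN : MCrit (fun g => N g)) :
    MCrit (fun g => M g ⊗ₖ N g) := by
  let E : Set K := Set.range (fun x : Γ × n × n => M x.1 x.2.1 x.2.2) ∪
    Set.range (fun x : Γ × m × m => N x.1 x.2.1 x.2.2)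
  have hE : E.Countable := (Set.countable_range _).union (Set.countable_range _)
  let F := Subfield.closure E
  have hF : Cardinal.mk F ≤ Cardinal.aleph0 :=
    (Subfield.cardinalMk_closure_le_max E).trans (max_le hE.le_aleph0 le_rfl)
  obtain ⟨φ⟩ := exists_embedding (F := F) hF
  obtain ⟨M₀, hM₀⟩ := lift_mat F M fun g i j =>
    Subfield.subset_closure (Or.inl ⟨(g, i, j), rfl⟩)
  obtain ⟨N₀, hN₀⟩ := lift_mat F N fun g i j =>
    Subfield.subset_closure (Or.inr ⟨(g, i, j), rfl⟩)
  have a1 : MCrit (fun g => M₀ g) := (mCrit_map F.subtype _).2 (by simpa only [hM₀] using hM)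
  have a2 : MCrit (fun g => N₀ g) := (mCrit_map F.subtype _).2 (by simpa only [hN₀] using hN)
  let M₁ : Γ →* Matrix n n ℂ := (RingHom.mapMatrix φ).toMonoidHom.comp M₀
  let N₁ : Γ →* Matrix m m ℂ := (RingHom.mapMatrix φ).toMonoidHom.comp N₀
  have hM₁ : ∀ g, M₁ g = (M₀ g).map φ := fun g => rfl
  have hN₁ : ∀ g, N₁ g = (N₀ g).map φ := fun g => rfl
  have b1 : MCrit (fun g => M₁ g) := by
    simp only [hM₁]; exact (mCrit_map φ _).1 a1
  have b2 : MCrit (fun g => N₁ g) := by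
    simp only [hN₁]; exact (mCrit_map φ _).1 a2
  have key := complex_mat M₁ N₁ b1 b2
  have a3 : MCrit (fun g => M₀ g ⊗ₖ N₀ g) := by
    rw [mCrit_map φ]
    convert key using 3 with g
    ext ⟨i, j⟩ ⟨i', j'⟩
    simp [hM₁, hN₁]
  rw [mCrit_map F.subtype] at a3
  convert a3 using 2 with g
  rw [← hM₀, ← hN₀]
  ext ⟨i, j⟩ ⟨i', j'⟩
  simp

lemma countable_case {k Γ V W : Type*} [Field k] [CharZero k] [Group Γ] [Countable Γ]
    [AddCommGroup V] [Module k V] [AddCommGroup W] [Module k W]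
    [FiniteDimensional k V] [FiniteDimensional k W]
    (ρV : Representation k Γ V) (ρW : Representation k Γ W)
    (hV : IsSemisimpleModule (MonoidAlgebra k Γ) ρV.asModule)
    (hW : IsSemisimpleModule (MonoidAlgebra k Γ) ρW.asModule) :
    IsSemisimpleModule (MonoidAlgebra k Γ) (ρV.tprod ρW).asModule := by
  let bn := finBasis k V
  let bm := finBasis k W
  rw [semisimple_iff_mCrit bn] at hV
  rw [semisimple_iff_mCrit bm] at hW
  rw [semisimple_iff_mCrit (bn.tensorProduct bm)]
  let M : Γ →* Matrix _ _ k := (LinearMap.toMatrixAlgEquiv bn).toRingEquiv.toMonoidHom.comp ρV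
  let N : Γ →* Matrix _ _ k := (LinearMap.toMatrixAlgEquiv bm).toRingEquiv.toMonoidHom.comp ρW
  have eM : ∀ g, M g = LinearMap.toMatrix bn bn (ρV g) := fun g => rfl
  have eN : ∀ g, N g = LinearMap.toMatrix bm bm (ρW g) := fun g => rfl
  have key := mat_case M N (by simpa only [eM] using hV) (by simpa only [eN] using hW)
  have e3 : ∀ g, LinearMap.toMatrix (bn.tensorProduct bm) (bn.tensorProduct bm) ((ρV.tprod ρW) g)
      = LinearMap.toMatrix bn bn (ρV g) ⊗ₖ LinearMap.toMatrix bm bm (ρW g) := fun g => by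
    rw [Representation.tprod_apply, TensorProduct.toMatrix_map]
  simp only [eM, eN] at key
  simp only [e3]
  exact key

lemma semisimple_comp {k G Γ V : Type*} [Field k] [CharZero k] [Group G] [Group Γ]
    [AddCommGroup V] [Module k V] [FiniteDimensional k V] (ρ : Representation k G V)
    (θ : Γ →* G) (S : Set G) (hS : ∀ g, ρ g ∈ Submodule.span k (ρ '' S))
    (hθ : S ⊆ Set.range θ) :
    IsSemisimpleModule (MonoidAlgebra k G) ρ.asModule ↔
      IsSemisimpleModule (MonoidAlgebra k Γ)
        (Representation.asModule (ρ.comp θ : Representation k Γ V)) := by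
  rw [crit_iff, crit_iff]
  have : Submodule.span k (Set.range ρ) =
      Submodule.span k (Set.range (ρ.comp θ : Representation k Γ V)) := by
    apply le_antisymm
    · rw [Submodule.span_le]
      rintro _ ⟨g, rfl⟩
      refine Submodule.span_mono ?_ (hS g)
      rintro _ ⟨s, hs, rfl⟩
      obtain ⟨x, rfl⟩ := hθ hs
      exact ⟨x, rfl⟩
    · refine Submodule.span_mono ?_
      rintro _ ⟨g, rfl⟩
      exact ⟨θ g, rfl⟩
  rw [this]

end Fin
end Chev

theorem tensor_semisimple_of_semisimple
    {k G V W : Type*} [Field k] [CharZero k] [Group G]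
    [AddCommGroup V] [Module k V] [AddCommGroup W] [Module k W]
    [FiniteDimensional k V] [FiniteDimensional k W]
    (ρV : Representation k G V) (ρW : Representation k G W)
    (hV : IsSemisimpleModule (MonoidAlgebra k G) ρV.asModule)
    (hW : IsSemisimpleModule (MonoidAlgebra k G) ρW.asModule) :
    IsSemisimpleModule (MonoidAlgebra k G) (ρV.tprod ρW).asModule := by
  classical
  obtain ⟨S, hS⟩ := Chev.span_finset (K := k)
    (fun g => (ρV g, ρW g, (ρV.tprod ρW) g) :
      G → Module.End k V × Module.End k W × Module.End k (TensorProduct k V W))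
  have hSV : ∀ g, ρV g ∈ Submodule.span k (ρV '' S) := fun g => by
    have := Submodule.mem_map_of_mem (f := LinearMap.fst k _ _) (hS g)
    rw [Submodule.map_span, Set.image_image] at this
    exact this
  have hSW : ∀ g, ρW g ∈ Submodule.span k (ρW '' S) := fun g => by
    have := Submodule.mem_map_of_mem (f := LinearMap.fst k _ _ ∘ₗ LinearMap.snd k _ _) (hS g)
    rw [Submodule.map_span, Set.image_image] at this
    exact this
  have hST : ∀ g, (ρV.tprod ρW) g ∈ Submodule.span k ((ρV.tprod ρW) '' S) := fun g => by
    have := Submodule.mem_map_of_mem (f := LinearMap.snd k _ _ ∘ₗ LinearMap.snd k _ _) (hS g)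
    rw [Submodule.map_span, Set.image_image] at this
    exact this
  let θ : FreeGroup S →* G := FreeGroup.lift (fun s : S => (s : G))
  have hθ : (S : Set G) ⊆ Set.range θ := fun s hs => ⟨FreeGroup.of ⟨s, hs⟩, by simp [θ]⟩
  have : Countable (FreeGroup S) := Quot.mk_surjective.countable
  rw [Chev.semisimple_comp _ θ S hSV hθ] at hV
  rw [Chev.semisimple_comp _ θ S hSW hθ] at hW
  rw [Chev.semisimple_comp _ θ S hST hθ]
  have key := Chev.countable_case _ _ hV hW
  have e : Representation.tprod (ρV.comp θ : Representation k (FreeGroup S) V)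
      (ρW.comp θ : Representation k (FreeGroup S) W) =
        ((ρV.tprod ρW).comp θ : Representation k (FreeGroup S) _) :=
    MonoidHom.ext fun g => rfl
  rw [e] at key
  exact key
end
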